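/- arXiv:2001.09004 — 2 statements merged into one kernel-verified Lean document; each statement's English description precedes it below -/
import Mathlib

section
/- There exists a projective plane of order 16 that contains 21 unitals whose associated 2-(65,5,1) designs are pairwise non-isomorphic. -/
/-- A finite projective plane: any two distinct points lie on a unique common line,
any two distinct lines meet in a unique common point, and there exist four points
no three of which are collinear. -/
structure ProjPlane where
  Point : Type
  Line : Type
  Incid : Point → Line → Prop
  finite_point : Finite Point
  finite_line : Finite Line
  exists_unique_line : ∀ p q : Point, p ≠ q → ∃! l : Line, Incid p l ∧ Incid q l
  exists_unique_point : ∀ l m : Line, l ≠ m → ∃! p : Point, Incid p l ∧ Incid p m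
  nondegenerate : ∃ f : Fin 4 → Point, Function.Injective f ∧
    ∀ l : Line, ∀ i j k : Fin 4, i ≠ j → i ≠ k → j ≠ k →
      ¬(Incid (f i) l ∧ Incid (f j) l ∧ Incid (f k) l)

/-- The plane has order `n`: every line contains exactly `n + 1` points. -/
def ProjPlane.HasOrder (Pl : ProjPlane) (n : ℕ) : Prop :=
  ∀ l : Pl.Line, {p : Pl.Point | Pl.Incid p l}.ncard = n + 1

/-- A unital in a plane of order `q ^ 2`: a set of `q ^ 3 + 1` points meeting every
line in exactly `1` or exactly `q + 1` points. -/
def ProjPlane.IsUnital (Pl : ProjPlane) (q : ℕ) (U : Set Pl.Point) : Prop :=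
  U.ncard = q ^ 3 + 1 ∧
    ∀ l : Pl.Line,
      (U ∩ {p | Pl.Incid p l}).ncard = 1 ∨ (U ∩ {p | Pl.Incid p l}).ncard = q + 1

/-- The blocks of the design associated to a unital: the intersections of the unital
with its secant lines, viewed as subsets of the unital. -/
def ProjPlane.unitalBlocks (Pl : ProjPlane) (q : ℕ) (U : Set Pl.Point) : Set (Set ↥U) :=
  {b | ∃ l : Pl.Line, (U ∩ {p | Pl.Incid p l}).ncard = q + 1 ∧
        b = {x : ↥U | Pl.Incid x.1 l}}

/-- An isomorphism of designs (given by their block families): a bijection between the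
point sets mapping every block to a block. -/
def DesignIso {α β : Type*} (B₁ : Set (Set α)) (B₂ : Set (Set β)) : Prop :=
  ∃ f : α ≃ β, ∀ b ∈ B₁, ⇑f '' b ∈ B₂

noncomputable section

namespace Unitals

/-- `strict n f = f n`; the recursor forces the kernel to evaluate `n` first. -/
def strict (n : ℕ) (f : ℕ → ℕ) : ℕ := Nat.rec (f 0) (fun n _ => f (Nat.succ n)) n

/-- `ite0 n a b` is `a` if `n = 0` and `b` otherwise. -/
def ite0 (n a b : ℕ) : ℕ := Nat.rec a (fun _ _ => b) n

/-- bit `x` of `m`. -/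
def tb (m x : ℕ) : ℕ := Nat.land (Nat.shiftRight m x) (nat_lit 1)

/-- number of one bits, by clearing the lowest bit repeatedly. -/
def pcF (fuel : ℕ) : ℕ → ℕ :=
  Nat.rec (fun _ => nat_lit 0) (fun _ ih C =>
    Nat.rec (nat_lit 0) (fun n _ => Nat.add (ih (Nat.land (Nat.succ n) n)) (nat_lit 1)) C) fuel

def pc (m : ℕ) : ℕ := pcF (nat_lit 300) m

/-- evaluate all the entries of a list. -/
def forceL (L : List ℕ) : (List ℕ → ℕ) → ℕ :=
  List.rec (fun k => k []) (fun a _ ih k => strict a fun v => ih fun t => k (v :: t)) L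

/-- select the entries with `g a ≠ 0`. -/
def selL (g : ℕ → ℕ) (L : List ℕ) : (List ℕ → ℕ) → ℕ :=
  List.rec (fun k => k []) (fun a _ ih k => ite0 (g a) (ih k) (ih fun t => k (a :: t))) L

def mapL (g : ℕ → ℕ) (L : List ℕ) : (List ℕ → ℕ) → ℕ :=
  List.rec (fun k => k []) (fun a _ ih k => strict (g a) fun v => ih fun t => k (v :: t)) L

def sumL (L : List ℕ) (g : ℕ → ℕ) : ℕ :=
  List.rec (nat_lit 0) (fun a _ ih => Nat.add (g a) ih) L

def allL (L : List ℕ) (g : ℕ → ℕ) : ℕ :=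
  List.rec (nat_lit 1) (fun a _ ih => ite0 (g a) (nat_lit 0) ih) L

/-- the mask of the positions in `L` whose entries satisfy `g a ≠ 0`. -/
def maskL (L : List ℕ) (g : ℕ → ℕ) : ℕ :=
  List.rec (nat_lit 0) (fun a _ ih =>
    Nat.add (Nat.mul (nat_lit 16) ih) (ite0 (g a) (nat_lit 0) (nat_lit 1))) L

/-- lists of pairs -/
inductive PL where
  | nil : PL
  | cons (l N : ℕ) (t : PL) : PL

def nbrs (L0 : List ℕ) (a : ℕ) : ℕ := maskL L0 (fun c => Nat.land a c)

def ofL (L0 : List ℕ) (L : List ℕ) : PL :=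
  List.rec PL.nil (fun a _ ih => PL.cons a (nbrs L0 a) ih) L

def buildN (L0 : List ℕ) (L : List ℕ) : (PL → ℕ) → ℕ :=
  List.rec (fun k => k PL.nil) (fun a _ ih k =>
    strict (nbrs L0 a) fun N => ih fun t => k (PL.cons a N t)) L

def selP (g : ℕ → ℕ) (L : PL) : (PL → ℕ) → ℕ :=
  PL.rec (fun k => k PL.nil)
    (fun a N _ ih k => ite0 (g a) (ih k) (ih fun t => k (PL.cons a N t))) L

def sumP (L : PL) (g : ℕ → ℕ) : ℕ :=
  PL.rec (nat_lit 0) (fun _ N _ ih => Nat.add (g N) ih) L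

def andP (b : ℕ) (T : PL) : ℕ → ℕ :=
  PL.rec (fun m => m)
    (fun l N _ ih m => ite0 (Nat.land l b) (ih m) (strict (Nat.land m N) ih)) T

def cube (n : ℕ) : ℕ := Nat.mul n (Nat.mul n n)

def neg (n : ℕ) : ℕ := Nat.sub (nat_lit 1) n

/-- the global invariant relative to the point `p`. -/
def invK (P L : List ℕ) (LN : PL) (p : ℕ) : ℕ :=
  sumL P fun x =>
    strict (maskL L fun c => Nat.mul (neg (tb c x)) (neg (tb c p))) fun W =>
    selP (fun l => Nat.mul (tb l x) (tb l p)) LN fun Bs =>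
    selP (fun l => Nat.mul (tb l x) (neg (tb l p))) LN fun Js =>
    sumP Bs fun Nb => strict (Nat.land W Nb) fun Z =>
    sumP Js fun Nj => strict (Nat.land Z Nj) fun m =>
    sumP Js fun Nk => strict (Nat.mod (Nat.land m Nk) (nat_lit 15)) cube

/-- the property characterising the special point -/
def qK (L : List ℕ) (LN : PL) (p : ℕ) : ℕ :=
  strict (maskL L fun c => neg (tb c p)) fun W =>
  selP (fun l => tb l p) LN fun T =>
  allL L fun b => ite0 (tb b p) (Nat.sub (Nat.mod (andP b T W) (nat_lit 15)) (nat_lit 1)) (nat_lit 1)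

def eqK (a b : ℕ) : ℕ := Nat.add (Nat.sub a b) (Nat.sub b a)

/-- the mask of a list of points -/
def maskP (P : List ℕ) : ℕ :=
  List.rec (nat_lit 0) (fun a _ ih => Nat.lor (Nat.shiftLeft (nat_lit 1) a) ih) P

def lenL (L : List ℕ) : ℕ := List.rec (nat_lit 0) (fun _ _ ih => Nat.succ ih) L

/-- all the checks for one unital, followed by the invariant -/
def chk (T P : List ℕ) (p : ℕ) : ℕ :=
  forceL P fun P => forceL T fun T => strict (maskP P) fun u =>
  mapL (fun t => Nat.land t u) T fun M =>
  ite0 (allL M fun m => strict (pc m) fun n =>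
    ite0 (Nat.mul (eqK n (nat_lit 1)) (eqK n (nat_lit 5))) (nat_lit 1) (nat_lit 0)) (nat_lit 0)
  (selL (fun m => neg (eqK (pc m) (nat_lit 5))) M fun L =>
  ite0 (eqK (lenL L) (nat_lit 208)) (buildN L L fun LN =>
  ite0 (allL P fun x => ite0 (eqK x p) (qK L LN x) (neg (qK L LN x))) (nat_lit 0)
    (invK P L LN p)) (nat_lit 0))

/-! ### Correctness of the evaluation functions -/

theorem strict_eq (n : ℕ) (f : ℕ → ℕ) : strict n f = f n := by cases n <;> rfl

theorem ite0_eq (n a b : ℕ) : ite0 n a b = if n = 0 then a else b := by cases n <;> simp [ite0]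

theorem forceL_eq (L : List ℕ) : ∀ k : List ℕ → ℕ, forceL L k = k L := by
  induction L with
  | nil => intro k; rfl
  | cons a t ih =>
    intro k
    change strict a (fun v => forceL t fun t => k (v :: t)) = _
    rw [strict_eq, ih]

theorem mapL_eq (g : ℕ → ℕ) (L : List ℕ) : ∀ k : List ℕ → ℕ, mapL g L k = k (L.map g) := by
  induction L with
  | nil => intro k; rfl
  | cons a t ih =>
    intro k
    change strict (g a) (fun v => mapL g t fun t => k (v :: t)) = _
    rw [strict_eq, ih, List.map_cons]

theorem selL_eq (g : ℕ → ℕ) (L : List ℕ) :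
    ∀ k : List ℕ → ℕ, selL g L k = k (L.filter fun a => g a ≠ 0) := by
  induction L with
  | nil => intro k; rfl
  | cons a t ih =>
    intro k
    change ite0 (g a) (selL g t k) (selL g t fun t => k (a :: t)) = _
    rw [ite0_eq, ih, ih, List.filter_cons]
    by_cases h : g a = 0 <;> simp [h]

theorem sumL_eq (L : List ℕ) (g : ℕ → ℕ) : sumL L g = (L.map g).sum := by
  induction L with
  | nil => rfl
  | cons a t ih =>
    change g a + sumL t g = _
    rw [ih, List.map_cons, List.sum_cons]

theorem allL_ne (L : List ℕ) (g : ℕ → ℕ) : allL L g ≠ 0 ↔ ∀ a ∈ L, g a ≠ 0 := by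
  induction L with
  | nil => simp [allL]
  | cons a t ih =>
    change ite0 (g a) 0 (allL t g) ≠ 0 ↔ _
    rw [ite0_eq]
    by_cases h : g a = 0
    · simp [h]
    · simp only [h, if_false, ih, List.forall_mem_cons, ne_eq, not_false_eq_true, true_and]

theorem buildN_eq (L0 L : List ℕ) : ∀ k : PL → ℕ, buildN L0 L k = k (ofL L0 L) := by
  induction L with
  | nil => intro k; rfl
  | cons a t ih =>
    intro k
    change strict (nbrs L0 a) (fun N => buildN L0 t fun t => k (PL.cons a N t)) = _
    rw [strict_eq, ih]
    rfl

theorem selP_eq (g : ℕ → ℕ) (L0 L : List ℕ) :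
    ∀ k : PL → ℕ, selP g (ofL L0 L) k = k (ofL L0 (L.filter fun a => g a ≠ 0)) := by
  induction L with
  | nil => intro k; rfl
  | cons a t ih =>
    intro k
    change ite0 (g a) (selP g (ofL L0 t) k)
      (selP g (ofL L0 t) fun t => k (PL.cons a (nbrs L0 a) t)) = _
    rw [ite0_eq, ih, ih, List.filter_cons]
    by_cases h : g a = 0
    · simp [h]
    · simp [h, ofL]

theorem sumP_eq (L0 L : List ℕ) (g : ℕ → ℕ) :
    sumP (ofL L0 L) g = (L.map fun a => g (nbrs L0 a)).sum := by
  induction L with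
  | nil => rfl
  | cons a t ih =>
    change g (nbrs L0 a) + sumP (ofL L0 t) g = _
    rw [ih, List.map_cons, List.sum_cons]

theorem maskL_cons (a : ℕ) (t : List ℕ) (g : ℕ → ℕ) :
    maskL (a :: t) g = 16 * maskL t g + (if g a = 0 then 0 else 1) := by
  change 16 * maskL t g + ite0 (g a) 0 1 = _
  rw [ite0_eq]

theorem maskL_congr {L : List ℕ} {g h : ℕ → ℕ} (H : ∀ c ∈ L, g c = 0 ↔ h c = 0) :
    maskL L g = maskL L h := by
  induction L with
  | nil => rfl
  | cons a t ih =>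
    rw [maskL_cons, maskL_cons, ih fun c hc => H c (List.mem_cons_of_mem _ hc)]
    simp only [H a List.mem_cons_self]

theorem maskL_mod (L : List ℕ) (g : ℕ → ℕ) :
    maskL L g % 15 = (L.countP fun c => g c ≠ 0) % 15 := by
  induction L with
  | nil => rfl
  | cons a t ih =>
    rw [maskL_cons, List.countP_cons]
    generalize (t.countP fun c => decide (g c ≠ 0)) = n at ih ⊢
    by_cases h : g a = 0
    · simp only [h, ne_eq, not_true_eq_false, decide_false, if_true]
      simp only [Bool.false_eq_true, if_false]
      omega
    · simp only [h, ne_eq, not_false_eq_true, decide_true, if_true, if_false]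
      omega

theorem land16 (a b : ℕ) (e f : Bool) :
    (16 * a + e.toNat) &&& (16 * b + f.toNat) = 16 * (a &&& b) + (e && f).toNat := by
  have key : ∀ (a : ℕ) (e : Bool), 16 * a + e.toNat =
      Nat.bit e (Nat.bit false (Nat.bit false (Nat.bit false a))) := by
    intro a e
    simp only [Nat.bit_val]
    simp; omega
  rw [key, key, key, Nat.land_bit, Nat.land_bit, Nat.land_bit, Nat.land_bit]
  rfl

theorem maskL_land (L : List ℕ) (g h : ℕ → ℕ) :
    Nat.land (maskL L g) (maskL L h) = maskL L fun c => g c * h c := by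
  change maskL L g &&& maskL L h = _
  induction L with
  | nil => exact Nat.zero_and 0
  | cons a t ih =>
    rw [maskL_cons, maskL_cons, maskL_cons, ← ih]
    have := land16 (maskL t g) (maskL t h) (decide (g a ≠ 0)) (decide (h a ≠ 0))
    by_cases h1 : g a = 0 <;> by_cases h2 : h a = 0 <;> simpa [h1, h2] using this

open Classical in
theorem andP_eq (b : ℕ) (L0 L : List ℕ) : ∀ g : ℕ → ℕ,
    andP b (ofL L0 L) (maskL L0 g) = maskL L0 fun c =>
      if g c ≠ 0 ∧ ∀ l ∈ L, Nat.land l b ≠ 0 → Nat.land l c ≠ 0 then 1 else 0 := by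
  induction L with
  | nil =>
    intro g
    refine maskL_congr fun c _ => ?_
    simp
  | cons a t ih =>
    intro g
    change ite0 (Nat.land a b) (andP b (ofL L0 t) (maskL L0 g))
      (strict (Nat.land (maskL L0 g) (nbrs L0 a)) (andP b (ofL L0 t))) = _
    rw [ite0_eq, strict_eq, nbrs, maskL_land, ih, ih]
    by_cases h : Nat.land a b = 0
    · rw [if_pos h]
      refine maskL_congr fun c _ => ?_
      have h' : a &&& b = 0 := h
      simp [h']
    · rw [if_neg h]
      refine maskL_congr fun c _ => ?_
      simp only [List.forall_mem_cons]
      have h' : ¬ (a &&& b = 0) := h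
      simp [h', and_assoc]

theorem tb_eq (m x : ℕ) : tb m x = (m.testBit x).toNat := by
  rw [Nat.testBit_eq_decide_div_mod_eq]
  change (m >>> x) &&& 1 = _
  rw [Nat.and_one_is_mod, Nat.shiftRight_eq_div_pow]
  rcases Nat.mod_two_eq_zero_or_one (m / 2 ^ x) with h | h <;> simp [h]

theorem tb_zero_or_one (m x : ℕ) : tb m x = 0 ∨ tb m x = 1 := by
  rw [tb_eq]; cases m.testBit x <;> simp

theorem tb_ne_zero (m x : ℕ) : tb m x ≠ 0 ↔ m.testBit x = true := by
  rw [tb_eq]; cases m.testBit x <;> simp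

theorem neg_tb (m x : ℕ) : neg (tb m x) ≠ 0 ↔ tb m x = 0 := by
  rcases tb_zero_or_one m x with h | h <;> rw [h] <;> simp [neg]

theorem eqK_eq (a b : ℕ) : eqK a b = 0 ↔ a = b := by
  change (a - b) + (b - a) = 0 ↔ _
  omega

theorem lenL_eq (L : List ℕ) : lenL L = L.length := by
  induction L with
  | nil => rfl
  | cons a t ih =>
    change lenL t + 1 = _
    rw [ih, List.length_cons]

theorem maskP_testBit (P : List ℕ) (x : ℕ) : (maskP P).testBit x = true ↔ x ∈ P := by
  induction P with
  | nil => simp [maskP]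
  | cons a t ih =>
    change ((1 <<< a) ||| maskP t).testBit x = true ↔ _
    rw [Nat.testBit_or, Bool.or_eq_true, ih, Nat.one_shiftLeft, Nat.testBit_two_pow, List.mem_cons]
    simp [eq_comm]

/-! ### Population count -/

theorem pcF_zero (f : ℕ) : pcF f 0 = 0 := by cases f <;> rfl

theorem pcF_succ (f m : ℕ) (h : m ≠ 0) : pcF (f + 1) m = pcF f (m &&& (m - 1)) + 1 := by
  cases m with
  | zero => exact absurd rfl h
  | succ n => rfl

theorem land_pred_even (m : ℕ) (h : m ≠ 0) : (2 * m) &&& (2 * m - 1) = 2 * (m &&& (m - 1)) := by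
  have h1 : 2 * m = Nat.bit false m := by simp [Nat.bit_val]
  have h2 : 2 * m - 1 = Nat.bit true (m - 1) := by simp [Nat.bit_val]; omega
  rw [h2, h1, Nat.land_bit]; simp [Nat.bit_val]

theorem land_pred_odd (m : ℕ) : (2 * m + 1) &&& (2 * m + 1 - 1) = 2 * m := by
  have h1 : 2 * m + 1 = Nat.bit true m := by simp [Nat.bit_val]
  have h2 : 2 * m + 1 - 1 = Nat.bit false m := by simp [Nat.bit_val]
  rw [h2, h1, Nat.land_bit]; simp [Nat.bit_val]

theorem pcF_even (f : ℕ) : ∀ m, pcF f (2 * m) = pcF f m := by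
  induction f with
  | zero => intro m; rfl
  | succ f ih =>
    intro m
    by_cases h : m = 0
    · subst h; rfl
    · rw [pcF_succ _ _ h, pcF_succ _ _ (by omega), land_pred_even _ h, ih]

/-- `pcF` counts one bits. -/
theorem pcF_eq (n : ℕ) : ∀ (f m : ℕ), n ≤ f → m < 2 ^ n →
    pcF f m = ((Finset.range n).filter fun i => m.testBit i = true).card := by
  induction n with
  | zero =>
    intro f m _ hm
    have : m = 0 := by simpa using hm
    subst this; simp [pcF_zero]
  | succ n ih =>
    intro f m hf hm
    obtain ⟨f, rfl⟩ : ∃ g, f = g + 1 := ⟨f - 1, by omega⟩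
    have hr : ((Finset.range (n + 1)).filter fun i => m.testBit i = true).card =
        ((Finset.range n).filter fun i => (m / 2).testBit i = true).card +
          (if m.testBit 0 = true then 1 else 0) := by
      rw [Finset.card_filter, Finset.sum_range_succ', Finset.card_filter]
      simp only [Nat.testBit_succ]
    have hm2 : m / 2 < 2 ^ n := by rw [pow_succ] at hm; omega
    rw [hr]
    rcases Nat.even_or_odd' m with ⟨k, rfl | rfl⟩
    · rw [pcF_even, ih (f + 1) k (by omega) (by omega)]
      simp
    · rw [pcF_succ _ _ (by omega), land_pred_odd, pcF_even, ih f k (by omega) (by omega)]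
      have : (2 * k + 1) / 2 = k := by omega
      simp [this]

/-! ### The invariants -/

open Classical in
/-- The property of a point that singles out the special point of the unitals. -/
def Qs (L : List ℕ) (p : ℕ) : Prop :=
  ∀ b ∈ L, tb b p = 0 → 1 < (L.countP fun c =>
    decide (tb c p = 0 ∧ ∀ l ∈ L, tb l p ≠ 0 → Nat.land l b ≠ 0 → Nat.land l c ≠ 0)) % 15

/-- The global invariant. -/
def invS (P L : List ℕ) (p : ℕ) : ℕ :=
  (P.map fun x =>
    ((L.filter fun b => decide (tb b x ≠ 0 ∧ tb b p ≠ 0)).map fun b =>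
      ((L.filter fun j => decide (tb j x ≠ 0 ∧ tb j p = 0)).map fun j =>
        ((L.filter fun j => decide (tb j x ≠ 0 ∧ tb j p = 0)).map fun k =>
          cube ((L.countP fun c => decide (tb c x = 0 ∧ tb c p = 0 ∧
            Nat.land b c ≠ 0 ∧ Nat.land j c ≠ 0 ∧ Nat.land k c ≠ 0)) % 15)).sum).sum).sum).sum

theorem qK_eq (L : List ℕ) (p : ℕ) : qK L (ofL L L) p ≠ 0 ↔ Qs L p := by
  unfold qK Qs
  rw [strict_eq, selP_eq, allL_ne]
  refine forall₂_congr fun b _ => ?_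
  rw [ite0_eq, andP_eq]
  by_cases h : tb b p = 0
  · rw [if_pos h]
    change (maskL L _ % 15 - 1 ≠ 0) ↔ _
    rw [maskL_mod]
    simp only [h, true_imp_iff]
    have : ∀ c, (neg (tb c p) ≠ 0) = (tb c p = 0) := fun c => propext (neg_tb c p)
    simp only [this, List.mem_filter, decide_eq_true_eq, and_imp]
    simp only [ite_eq_right_iff, one_ne_zero, imp_false, not_not, ne_eq]
    omega
  · simp [h]

theorem invK_eq (P L : List ℕ) (p : ℕ) : invK P L (ofL L L) p = invS P L p := by
  unfold invK invS
  rw [sumL_eq]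
  congr 1
  refine List.map_congr_left fun x _ => ?_
  have e1 : ∀ l, (Nat.mul (tb l x) (tb l p) ≠ 0) = (tb l x ≠ 0 ∧ tb l p ≠ 0) := by
    intro l; exact propext mul_ne_zero_iff
  have e2 : ∀ l, (Nat.mul (tb l x) (neg (tb l p)) ≠ 0) = (tb l x ≠ 0 ∧ tb l p = 0) := by
    intro l
    rw [← neg_tb l p]; exact propext mul_ne_zero_iff
  have e3 : ∀ l, (Nat.mul (neg (tb l x)) (neg (tb l p)) ≠ 0) = (tb l x = 0 ∧ tb l p = 0) := by
    intro l
    rw [← neg_tb l p, ← neg_tb l x]; exact propext mul_ne_zero_iff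
  rw [strict_eq, selP_eq, selP_eq, sumP_eq]
  simp only [e1, e2]
  congr 1
  refine List.map_congr_left fun b _ => ?_
  rw [strict_eq, sumP_eq]
  congr 1
  refine List.map_congr_left fun j _ => ?_
  rw [strict_eq, sumP_eq]
  congr 1
  refine List.map_congr_left fun k _ => ?_
  rw [strict_eq]
  congr 1
  unfold nbrs
  rw [maskL_land, maskL_land, maskL_land]
  change maskL L _ % 15 = _
  rw [maskL_mod]
  congr 1
  refine List.countP_congr fun c _ => ?_
  simp only [decide_eq_true_eq]
  rw [mul_ne_zero_iff, mul_ne_zero_iff, mul_ne_zero_iff, e3]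
  tauto

/-- The blocks of the design of `P` in the plane with lines `T`. -/
def blocks (T P : List ℕ) : List ℕ :=
  (T.map fun t => Nat.land t (maskP P)).filter fun m => decide (pc m = 5)

theorem chk_spec {T P : List ℕ} {p v : ℕ} (h : chk T P p = v) (hv : v ≠ 0) :
    (∀ t ∈ T, pc (Nat.land t (maskP P)) = 1 ∨ pc (Nat.land t (maskP P)) = 5) ∧
    (blocks T P).length = 208 ∧ (∀ x ∈ P, (Qs (blocks T P) x ↔ x = p)) ∧
    invS P (blocks T P) p = v := by
  subst h
  unfold chk at hv ⊢
  simp only [forceL_eq, strict_eq, mapL_eq, selL_eq, buildN_eq] at hv ⊢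
  have hb : ((T.map fun t => Nat.land t (maskP P)).filter
      fun m => decide (neg (eqK (pc m) 5) ≠ 0)) = blocks T P := by
    unfold blocks
    congr 1
    funext m
    congr 1
    rw [← eqK_eq]
    change (1 - eqK (pc m) 5 ≠ 0) = _
    apply propext; omega
  rw [hb] at hv ⊢
  rw [ite0_eq] at hv ⊢
  split_ifs at hv ⊢ with h1
  · exact absurd rfl hv
  rw [ite0_eq] at hv ⊢
  split_ifs at hv ⊢ with h2
  swap
  · exact absurd rfl hv
  rw [ite0_eq] at hv ⊢
  split_ifs at hv ⊢ with h3
  · exact absurd rfl hv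
  refine ⟨?_, ?_, ?_, ?_⟩
  · intro t ht
    have := (allL_ne _ _).1 h1 _ (List.mem_map_of_mem ht)
    rw [ite0_eq] at this
    split_ifs at this with h4
    · rcases Nat.mul_eq_zero.1 h4 with h4 | h4
      · exact Or.inl ((eqK_eq _ _).1 h4)
      · exact Or.inr ((eqK_eq _ _).1 h4)
    · exact absurd rfl this
  · rw [← lenL_eq]; exact (eqK_eq _ _).1 h2
  · intro x hx
    have := (allL_ne _ _).1 h3 x hx
    rw [ite0_eq] at this
    rw [← qK_eq]
    split_ifs at this with h4
    · have h5 := (eqK_eq _ _).1 h4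
      exact ⟨fun _ => h5, fun _ => this⟩
    · have h5 := fun e => h4 ((eqK_eq _ _).2 e)
      have h6 : qK (blocks T P) (ofL (blocks T P) (blocks T P)) x = 0 := by
        change 1 - _ ≠ 0 at this
        generalize qK (blocks T P) (ofL (blocks T P) (blocks T P)) x = w at this ⊢
        omega
      exact ⟨fun h => absurd h6 h, fun h => absurd h h5⟩
  · rw [invK_eq]

/-! ### Invariance under isomorphism -/

/-- isomorphism data between the list designs `(P, L)` and `(P', L')`. -/
structure LIso (P L P' L' : List ℕ) (f φ : ℕ → ℕ) : Prop where
  hP : (P.map f).Perm P'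
  hL : (L.map φ).Perm L'
  hf : ∀ x ∈ P, ∀ b ∈ L, tb (φ b) (f x) = tb b x
  hs : ∀ b ∈ L, ∀ x, b.testBit x = true → x ∈ P
  hs' : ∀ b ∈ L', ∀ x, b.testBit x = true → x ∈ P'

theorem land_ne_zero_iff (a b : ℕ) :
    Nat.land a b ≠ 0 ↔ ∃ x, a.testBit x = true ∧ b.testBit x = true := by
  change a &&& b ≠ 0 ↔ _
  constructor
  · intro h
    obtain ⟨i, hi⟩ := Nat.exists_testBit_of_ne_zero h
    rw [Nat.testBit_and, Bool.and_eq_true] at hi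
    exact ⟨i, hi⟩
  · rintro ⟨x, h1, h2⟩ h0
    have : (a &&& b).testBit x = true := by rw [Nat.testBit_and, h1, h2]; rfl
    rw [h0] at this
    simp at this

section
variable {P L P' L' : List ℕ} {f φ : ℕ → ℕ}

theorem LIso.memP (h : LIso P L P' L' f φ) {y : ℕ} : y ∈ P' ↔ ∃ x ∈ P, f x = y := by
  rw [← h.hP.mem_iff, List.mem_map]

theorem LIso.memL (h : LIso P L P' L' f φ) {y : ℕ} : y ∈ L' ↔ ∃ x ∈ L, φ x = y := by
  rw [← h.hL.mem_iff, List.mem_map]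

theorem LIso.land (h : LIso P L P' L' f φ) {a b : ℕ} (ha : a ∈ L) (hb : b ∈ L) :
    Nat.land (φ a) (φ b) ≠ 0 ↔ Nat.land a b ≠ 0 := by
  rw [land_ne_zero_iff, land_ne_zero_iff]
  constructor
  · rintro ⟨y, h1, h2⟩
    obtain ⟨x, hx, rfl⟩ := h.memP.1 (h.hs' _ (h.memL.2 ⟨a, ha, rfl⟩) y h1)
    rw [← tb_ne_zero, h.hf x hx _ ha, tb_ne_zero] at h1
    rw [← tb_ne_zero, h.hf x hx _ hb, tb_ne_zero] at h2
    exact ⟨x, h1, h2⟩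
  · rintro ⟨x, h1, h2⟩
    have hx := h.hs a ha x h1
    refine ⟨f x, ?_, ?_⟩
    · rw [← tb_ne_zero, h.hf x hx _ ha, tb_ne_zero]; exact h1
    · rw [← tb_ne_zero, h.hf x hx _ hb, tb_ne_zero]; exact h2

theorem LIso.countP (h : LIso P L P' L' f φ) {c c' : ℕ → Bool}
    (hc : ∀ b ∈ L, c' (φ b) = c b) : L'.countP c' = L.countP c := by
  rw [← h.hL.countP_eq, List.countP_map]
  exact List.countP_congr fun b hb => by simp [hc b hb]

theorem LIso.sum (h : LIso P L P' L' f φ) {c c' : ℕ → Bool} {g g' : ℕ → ℕ}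
    (hc : ∀ b ∈ L, c' (φ b) = c b) (hg : ∀ b ∈ L, g' (φ b) = g b) :
    ((L'.filter c').map g').sum = ((L.filter c).map g).sum := by
  rw [← ((h.hL.filter c').map g').sum_eq, List.filter_map, List.map_map]
  rw [List.filter_congr (p := c' ∘ φ) (q := c) (fun b hb => hc b hb)]
  congr 1
  exact List.map_congr_left fun b hb => hg b (List.mem_of_mem_filter hb)

theorem LIso.Qs (h : LIso P L P' L' f φ) {p : ℕ} (hp : p ∈ P) : Qs L' (f p) ↔ Qs L p := by
  unfold Unitals.Qs
  constructor
  · intro H b hb h0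
    have := H (φ b) (h.memL.2 ⟨b, hb, rfl⟩) (by rw [h.hf p hp b hb]; exact h0)
    rwa [h.countP (c := fun c => decide (tb c p = 0 ∧ ∀ l ∈ L, tb l p ≠ 0 →
      Nat.land l b ≠ 0 → Nat.land l c ≠ 0))] at this
    intro c hc
    rw [decide_eq_decide, h.hf p hp c hc]
    refine and_congr_right fun _ => ?_
    constructor
    · intro H l hl
      have := H (φ l) (h.memL.2 ⟨l, hl, rfl⟩)
      rwa [h.hf p hp l hl, h.land hl hb, h.land hl hc] at this
    · intro H l hl'
      obtain ⟨l, hl, rfl⟩ := h.memL.1 hl'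
      rw [h.hf p hp l hl, h.land hl hb, h.land hl hc]
      exact H l hl
  · intro H b hb' h0
    obtain ⟨b, hb, rfl⟩ := h.memL.1 hb'
    have := H b hb (by rw [h.hf p hp b hb] at h0; exact h0)
    rwa [h.countP (c := fun c => decide (tb c p = 0 ∧ ∀ l ∈ L, tb l p ≠ 0 →
      Nat.land l b ≠ 0 → Nat.land l c ≠ 0))]
    intro c hc
    rw [decide_eq_decide, h.hf p hp c hc]
    refine and_congr_right fun _ => ?_
    constructor
    · intro H l hl
      have := H (φ l) (h.memL.2 ⟨l, hl, rfl⟩)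
      rwa [h.hf p hp l hl, h.land hl hb, h.land hl hc] at this
    · intro H l hl'
      obtain ⟨l, hl, rfl⟩ := h.memL.1 hl'
      rw [h.hf p hp l hl, h.land hl hb, h.land hl hc]
      exact H l hl

theorem LIso.invS (h : LIso P L P' L' f φ) {p : ℕ} (hp : p ∈ P) :
    invS P' L' (f p) = invS P L p := by
  unfold Unitals.invS
  rw [← (h.hP.map _).sum_eq, List.map_map]
  congr 1
  refine List.map_congr_left fun x hx => ?_
  simp only [Function.comp]
  refine h.sum (fun b hb => ?_) (fun b hb => ?_)
  · rw [h.hf p hp b hb, h.hf x hx b hb]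
  refine h.sum (fun j hj => ?_) (fun j hj => ?_)
  · rw [h.hf p hp j hj, h.hf x hx j hj]
  refine h.sum (fun k hk => ?_) (fun k hk => ?_)
  · rw [h.hf p hp k hk, h.hf x hx k hk]
  congr 2
  refine h.countP fun c hc => ?_
  rw [decide_eq_decide, h.hf p hp c hc, h.hf x hx c hc, h.land hb hc, h.land hj hc, h.land hk hc]

end

/-! ### The plane -/

def orK (T : List ℕ) (p : ℕ) : ℕ :=
  List.rec (nat_lit 0) (fun a _ ih => ite0 (tb a p) ih (Nat.lor a ih)) T

def pairsK (T : List ℕ) : ℕ :=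
  List.rec (nat_lit 1) (fun a t ih => ite0 (allL t fun b => ite0 (Nat.land a b) (nat_lit 0)
    (ite0 (Nat.land (Nat.land a b) (Nat.sub (Nat.land a b) (nat_lit 1))) (nat_lit 1) (nat_lit 0)))
    (nat_lit 0) ih) T

/-- the number `2 ^ 273` -/
def full : ℕ := 2 ^ 273

def planeK (T : List ℕ) : ℕ :=
  forceL T fun T =>
  ite0 (allL T fun t => neg (Nat.add (Nat.shiftRight t (nat_lit 273)) (eqK (pc t) (nat_lit 17))))
    (nat_lit 0) (
  ite0 (allL T fun t => Nat.sub (nat_lit 3) (Nat.add (Nat.add (tb t (nat_lit 0))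
    (tb t (nat_lit 1))) (Nat.add (tb t (nat_lit 16)) (tb t (nat_lit 17)))))
    (nat_lit 0) (
  ite0 (allL (List.range (nat_lit 273)) fun p => neg (eqK (Nat.succ (orK T p))
    full)) (nat_lit 0)
  (pairsK T)))

theorem orK_testBit (T : List ℕ) (p i : ℕ) (h : (orK T p).testBit i = true) :
    ∃ t ∈ T, t.testBit p = true ∧ t.testBit i = true := by
  induction T with
  | nil => simp [orK] at h
  | cons a t ih =>
    change (ite0 (tb a p) (orK t p) (a ||| orK t p)).testBit i = true at h
    rw [ite0_eq] at h
    split_ifs at h with h1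
    · obtain ⟨t, h2, h3⟩ := ih h
      exact ⟨t, List.mem_cons_of_mem _ h2, h3⟩
    · rw [Nat.testBit_or, Bool.or_eq_true] at h
      rcases h with h | h
      · exact ⟨a, List.mem_cons_self, (tb_ne_zero _ _).1 h1, h⟩
      · obtain ⟨t, h2, h3⟩ := ih h
        exact ⟨t, List.mem_cons_of_mem _ h2, h3⟩

theorem pairsK_spec {T : List ℕ} (h : pairsK T ≠ 0) :
    T.Pairwise fun a b => pc (Nat.land a b) = 1 := by
  induction T with
  | nil => exact List.Pairwise.nil
  | cons a t ih =>
    change ite0 _ 0 (pairsK t) ≠ 0 at h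
    rw [ite0_eq] at h
    split_ifs at h with h1
    · exact absurd rfl h
    refine List.Pairwise.cons (fun b hb => ?_) (ih h)
    have := (allL_ne _ _).1 h1 b hb
    rw [ite0_eq] at this
    split_ifs at this with h2
    · exact absurd rfl this
    rw [ite0_eq] at this
    split_ifs at this with h3
    · change pcF (299 + 1) _ = 1
      rw [pcF_succ _ _ h2]
      change pcF 299 (Nat.land (Nat.land a b) (Nat.sub (Nat.land a b) 1)) + 1 = 1
      rw [h3, pcF_zero]
    · exact absurd rfl this

/-- the properties of the line table -/
structure Table (T : List ℕ) : Prop where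
  lt : ∀ t ∈ T, t < 2 ^ 273
  card : ∀ t ∈ T, pc t = 17
  quad : ∀ t ∈ T, (tb t 0 + tb t 1) + (tb t 16 + tb t 17) < 3
  join : ∀ p < 273, ∀ q < 273, ∃ t ∈ T, t.testBit p = true ∧ t.testBit q = true
  meet : T.Pairwise fun a b => pc (Nat.land a b) = 1

set_option exponentiation.threshold 300 in
theorem planeK_spec {T : List ℕ} (h : planeK T ≠ 0) : Table T := by
  unfold planeK at h
  rw [forceL_eq, ite0_eq] at h
  split_ifs at h with h1
  · exact absurd rfl h
  rw [ite0_eq] at h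
  split_ifs at h with h2
  · exact absurd rfl h
  rw [ite0_eq] at h
  split_ifs at h with h3
  · exact absurd rfl h
  rw [← ne_eq, allL_ne] at h1 h2 h3
  have h1' : ∀ t ∈ T, t >>> 273 = 0 ∧ pc t = 17 := by
    intro t ht
    have := h1 t ht
    change 1 - (t >>> 273 + eqK (pc t) 17) ≠ 0 at this
    rw [← eqK_eq (pc t)]
    generalize t >>> 273 = a at *
    omega
  refine ⟨fun t ht => ?_, fun t ht => (h1' t ht).2, fun t ht => ?_, ?_, pairsK_spec h⟩
  · have := (h1' t ht).1
    rw [Nat.shiftRight_eq_div_pow] at this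
    exact Nat.lt_of_div_eq_zero (by positivity) this
  · have := h2 t ht
    change 3 - ((tb t 0 + tb t 1) + (tb t 16 + tb t 17)) ≠ 0 at this
    omega
  · intro p hp q hq
    have := h3 p (List.mem_range.2 hp)
    change 1 - eqK (orK T p + 1) full ≠ 0 at this
    have e : eqK (orK T p + 1) full = 0 := by
      generalize eqK (orK T p + 1) full = a at *
      omega
    rw [eqK_eq, full] at e
    refine orK_testBit T p q ?_
    have e' : orK T p = 2 ^ 273 - 1 := Nat.eq_sub_of_add_eq e
    rw [e', Nat.testBit_two_pow_sub_one]
    simpa using hq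

theorem planeK_beq {T : List ℕ} (h : Nat.beq (planeK T) (nat_lit 0) = false) : Table T :=
  planeK_spec (Nat.ne_of_beq_eq_false h)

theorem ncard_eq_pc {m : ℕ} (h : m < 2 ^ 273) :
    {p : Fin 273 | m.testBit p.1 = true}.ncard = pc m := by
  have h1 : pc m = ((Finset.range 273).filter fun i => m.testBit i = true).card :=
    pcF_eq 273 300 m (by norm_num) h
  rw [h1, ← Set.ncard_image_of_injective _ Fin.val_injective, ← Set.ncard_coe_finset]
  congr 1
  ext i
  simp only [Set.mem_image, Set.mem_ofPred_eq, Finset.coe_filter, Finset.mem_range]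
  constructor
  · rintro ⟨p, hp, rfl⟩; exact ⟨p.2, hp⟩
  · rintro ⟨hi, hp⟩; exact ⟨⟨i, hi⟩, hp, rfl⟩

theorem Table.get_lt {T : List ℕ} (h : Table T) (l : Fin T.length) : T.get l < 2 ^ 273 :=
  h.lt _ (List.get_mem _ _)

theorem Table.meet_ne {T : List ℕ} (h : Table T) {l m : Fin T.length} (hlm : l ≠ m) :
    pc (Nat.land (T.get l) (T.get m)) = 1 := by
  have := List.pairwise_iff_get.1 h.meet
  rcases lt_or_gt_of_ne hlm with h1 | h1
  · exact this l m h1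
  · have h2 := this m l h1
    have : Nat.land (T.get m) (T.get l) = Nat.land (T.get l) (T.get m) := Nat.and_comm _ _
    rwa [this] at h2

theorem Table.exists_unique {T : List ℕ} (h : Table T) {l m : Fin T.length} (hlm : l ≠ m) :
    ∃! p : Fin 273, (T.get l).testBit p.1 = true ∧ (T.get m).testBit p.1 = true := by
  have h1 := h.meet_ne hlm
  have h2 : Nat.land (T.get l) (T.get m) < 2 ^ 273 :=
    lt_of_le_of_lt Nat.and_le_left (h.get_lt l)
  rw [← ncard_eq_pc h2, Set.ncard_eq_one] at h1
  obtain ⟨p, hp⟩ := h1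
  have key : ∀ q : Fin 273, ((T.get l).testBit q.1 = true ∧ (T.get m).testBit q.1 = true) ↔
      q = p := by
    intro q
    have : q ∈ {p : Fin 273 | (Nat.land (T.get l) (T.get m)).testBit p.1 = true} ↔ q = p := by
      rw [hp]; rfl
    rw [← this]
    change _ ↔ (T.get l &&& T.get m).testBit q.1 = true
    rw [Nat.testBit_and, Bool.and_eq_true]
  exact ⟨p, (key p).2 rfl, fun q hq => (key q).1 hq⟩

/-- the plane defined by a line table -/
def plane (T : List ℕ) (h : Table T) : ProjPlane where
  Point := Fin 273
  Line := Fin T.length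
  Incid p l := (T.get l).testBit p.1 = true
  finite_point := inferInstance
  finite_line := inferInstance
  exists_unique_line := by
    intro p q hpq
    obtain ⟨t, ht, h1, h2⟩ := h.join p.1 p.2 q.1 q.2
    obtain ⟨l, rfl⟩ := List.get_of_mem ht
    refine ⟨l, ⟨h1, h2⟩, ?_⟩
    rintro m ⟨h3, h4⟩
    by_contra hlm
    exact hpq ((h.exists_unique hlm).unique ⟨h3, h1⟩ ⟨h4, h2⟩)
  exists_unique_point := fun l m hlm => h.exists_unique hlm
  nondegenerate := by
    refine ⟨![0, 1, 16, 17], by decide, ?_⟩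
    rintro l i j k hij hik hjk ⟨h1, h2, h3⟩
    have := h.quad _ (List.get_mem T l)
    simp only [tb_eq] at this
    generalize T.get l = t at *
    have key : ∀ i : Fin 4, t.testBit ((![0, 1, 16, 17] : Fin 4 → Fin 273) i).1 =
        ![t.testBit 0, t.testBit 1, t.testBit 16, t.testBit 17] i := by
      intro i; fin_cases i <;> rfl
    rw [key] at h1 h2 h3
    generalize t.testBit 0 = a0 at *
    generalize t.testBit 1 = a1 at *
    generalize t.testBit 16 = a2 at *
    generalize t.testBit 17 = a3 at *
    clear key
    revert i j k a0 a1 a2 a3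
    decide

theorem plane_order (T : List ℕ) (h : Table T) : (plane T h).HasOrder 16 := by
  intro l
  exact (ncard_eq_pc (h.get_lt l)).trans (h.card _ (List.get_mem _ _))

/-! ### The unitals -/

/-- conditions on the list of points of a unital -/
structure Pts (P : List ℕ) : Prop where
  nodup : P.Nodup
  len : P.length = 65
  lt : ∀ x ∈ P, x < 273

/-- the point set of a list -/
def ptSet (P : List ℕ) : Set (Fin 273) := {p | p.1 ∈ P}

theorem ptSet_ncard {P : List ℕ} (h : Pts P) : (ptSet P).ncard = 65 := by
  rw [← h.len, ← List.toFinset_card_of_nodup h.nodup,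
    ← Set.ncard_image_of_injective _ Fin.val_injective, ← Set.ncard_coe_finset]
  congr 1
  ext i
  simp only [Set.mem_image, List.coe_toFinset, Set.mem_ofPred_eq, ptSet]
  constructor
  · rintro ⟨p, hp, rfl⟩; exact hp
  · intro hi; exact ⟨⟨i, h.lt i hi⟩, hi, rfl⟩

theorem land_maskP (P : List ℕ) (t x : ℕ) :
    (Nat.land t (maskP P)).testBit x = true ↔ t.testBit x = true ∧ x ∈ P := by
  change (t &&& maskP P).testBit x = true ↔ _
  rw [Nat.testBit_and, Bool.and_eq_true, maskP_testBit]

theorem inter_ncard {T : List ℕ} (h : Table T) (P : List ℕ) (l : Fin T.length) :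
    (ptSet P ∩ {p : Fin 273 | (T.get l).testBit p.1 = true}).ncard =
      pc (Nat.land (T.get l) (maskP P)) := by
  have h2 : Nat.land (T.get l) (maskP P) < 2 ^ 273 :=
    lt_of_le_of_lt Nat.and_le_left (h.get_lt l)
  rw [← ncard_eq_pc h2]
  congr 1
  ext p
  simp only [Set.mem_inter_iff, Set.mem_ofPred_eq, land_maskP, ptSet]
  exact and_comm

theorem isUnital {T P : List ℕ} (h : Table T) (hP : Pts P)
    (hc : ∀ t ∈ T, pc (Nat.land t (maskP P)) = 1 ∨ pc (Nat.land t (maskP P)) = 5) :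
    (plane T h).IsUnital 4 (ptSet P) := by
  refine ⟨ptSet_ncard hP, fun l => ?_⟩
  have := hc _ (List.get_mem T l)
  rw [← inter_ncard h P l] at this
  exact this

theorem mem_blocks {T P : List ℕ} {b : ℕ} :
    b ∈ blocks T P ↔ ∃ l : Fin T.length, Nat.land (T.get l) (maskP P) = b ∧ pc b = 5 := by
  unfold blocks
  rw [List.mem_filter, List.mem_map, decide_eq_true_eq]
  constructor
  · rintro ⟨⟨t, ht, h1⟩, h2⟩
    obtain ⟨l, rfl⟩ := List.get_of_mem ht
    exact ⟨l, h1, h2⟩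
  · rintro ⟨l, h1, h2⟩
    exact ⟨⟨T.get l, List.get_mem _ _, h1⟩, h2⟩

theorem blocks_nodup {T P : List ℕ} (h : Table T) : (blocks T P).Nodup := by
  unfold blocks
  rw [List.Nodup, List.pairwise_filter, List.pairwise_map]
  refine h.meet.imp_of_mem fun {a b} ha hb hab => ?_
  intro h5 _ he
  rw [decide_eq_true_eq] at h5
  have l1 : Nat.land a (maskP P) < 2 ^ 273 := lt_of_le_of_lt Nat.and_le_left (h.lt a ha)
  have l2 : Nat.land a b < 2 ^ 273 := lt_of_le_of_lt Nat.and_le_left (h.lt a ha)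
  rw [← ncard_eq_pc l1] at h5
  rw [← ncard_eq_pc l2] at hab
  have : {p : Fin 273 | (Nat.land a (maskP P)).testBit p.1 = true} ⊆
      {p : Fin 273 | (Nat.land a b).testBit p.1 = true} := by
    intro p hp
    have hp2 : (Nat.land b (maskP P)).testBit p.1 = true := he ▸ hp
    have h1 := ((land_maskP P a p.1).1 hp).1
    have h2 := ((land_maskP P b p.1).1 hp2).1
    change (a &&& b).testBit p.1 = true
    rw [Nat.testBit_and, h1, h2]; rfl
  have := Set.ncard_le_ncard this (Set.toFinite _)
  omega

theorem blocks_sub {T P : List ℕ} {b : ℕ} (hb : b ∈ blocks T P) (x : ℕ)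
    (hx : b.testBit x = true) : x ∈ P := by
  obtain ⟨l, rfl, _⟩ := mem_blocks.1 hb
  exact ((land_maskP P _ x).1 hx).2

theorem exists_LIso {T P P' : List ℕ} (h : Table T) (hP : Pts P) (hP' : Pts P')
    (hl : (blocks T P).length = 208) (hl' : (blocks T P').length = 208)
    (H : DesignIso ((plane T h).unitalBlocks 4 (ptSet P))
      ((plane T h).unitalBlocks 4 (ptSet P'))) :
    ∃ f φ, LIso P (blocks T P) P' (blocks T P') f φ := by
  classical
  obtain ⟨F, hF⟩ := H
  let e : ∀ x, x ∈ P → ↥(ptSet P) := fun x hx => ⟨⟨x, hP.lt x hx⟩, hx⟩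
  let f : ℕ → ℕ := fun x => if hx : x ∈ P then (F (e x hx)).1.1 else 0
  have hf : ∀ x (hx : x ∈ P), f x = (F (e x hx)).1.1 := fun x hx => dif_pos hx
  have hfP : ∀ x ∈ P, f x ∈ P' := fun x hx => by rw [hf x hx]; exact (F (e x hx)).2
  have hfinj : ∀ x ∈ P, ∀ y ∈ P, f x = f y → x = y := by
    intro x hx y hy hxy
    rw [hf x hx, hf y hy] at hxy
    have h1 := F.injective (Subtype.ext (Fin.ext hxy))
    have h2 := congrArg (fun z : ↥(ptSet P) => z.1.1) h1
    exact h2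
  have hb : ∀ b ∈ blocks T P, ∃ b' ∈ blocks T P', ∀ x ∈ P,
      (b'.testBit (f x) = true ↔ b.testBit x = true) := by
    intro b hb
    obtain ⟨l, hlb, h5⟩ := mem_blocks.1 hb
    obtain ⟨l', h5', hl'⟩ := hF {x | (plane T h).Incid x.1 l} ⟨l, by
      change (ptSet P ∩ {p : Fin 273 | (T.get l).testBit p.1 = true}).ncard = 5
      rw [inter_ncard h, hlb, h5], rfl⟩
    have h6 : pc (Nat.land (T.get l') (maskP P')) = 5 := (inter_ncard h P' l').symm.trans h5'
    refine ⟨_, mem_blocks.2 ⟨l', rfl, h6⟩, fun x hx => ?_⟩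
    rw [land_maskP, ← hlb, land_maskP]
    have h1 : F (e x hx) ∈ F '' {x | (plane T h).Incid x.1 l} ↔
        (T.get l).testBit x = true := by
      exact F.injective.mem_set_image
    have h3 : F (e x hx) ∈ F '' {x | (plane T h).Incid x.1 l} ↔
        (T.get l').testBit (F (e x hx)).1.1 = true :=
      iff_of_eq (congrArg (fun s => F (e x hx) ∈ s) hl')
    have h2 : (T.get l').testBit (f x) = true ↔ (T.get l).testBit x = true := by
      rw [hf x hx]; exact h3.symm.trans h1
    simp only [h2, hfP x hx, hx]
  choose! φ hφ1 hφ2 using hb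
  have hφinj : ∀ a ∈ blocks T P, ∀ b ∈ blocks T P, φ a = φ b → a = b := by
    intro a ha b hb hab
    apply Nat.eq_of_testBit_eq
    intro x
    rw [Bool.eq_iff_iff]
    constructor
    · intro hx
      have hxP := blocks_sub ha x hx
      rw [← hφ2 a ha x hxP, hab, hφ2 b hb x hxP] at hx
      exact hx
    · intro hx
      have hxP := blocks_sub hb x hx
      rw [← hφ2 b hb x hxP, ← hab, hφ2 a ha x hxP] at hx
      exact hx
  refine ⟨f, φ, ?_, ?_, ?_, fun b hb => blocks_sub hb, fun b hb => blocks_sub hb⟩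
  · refine List.Subperm.perm_of_length_le (List.Nodup.subperm ?_ ?_) ?_
    · exact hP.nodup.map_on hfinj
    · intro y hy
      obtain ⟨x, hx, rfl⟩ := List.mem_map.1 hy
      exact hfP x hx
    · rw [List.length_map, hP.len, hP'.len]
  · refine List.Subperm.perm_of_length_le (List.Nodup.subperm ?_ ?_) ?_
    · exact (blocks_nodup h).map_on hφinj
    · intro y hy
      obtain ⟨x, hx, rfl⟩ := List.mem_map.1 hy
      exact hφ1 x hx
    · rw [List.length_map, hl, hl']
  · intro x hx b hb
    have := hφ2 b hb x hx
    rw [tb_eq, tb_eq, Bool.eq_iff_iff.2 this]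

/-- The main criterion: two unitals with different invariants have non-isomorphic designs. -/
theorem not_iso {T P P' : List ℕ} {p v v' : ℕ} (h : Table T) (hP : Pts P) (hP' : Pts P')
    (hp : p ∈ P) (hv : chk T P p = v) (hv' : chk T P' p = v') (h0 : v ≠ 0) (h0' : v' ≠ 0)
    (hne : v ≠ v') :
    ¬ DesignIso ((plane T h).unitalBlocks 4 (ptSet P))
      ((plane T h).unitalBlocks 4 (ptSet P')) := by
  intro H
  obtain ⟨_, hl, hQ, hi⟩ := chk_spec hv h0
  obtain ⟨_, hl', hQ', hi'⟩ := chk_spec hv' h0'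
  obtain ⟨f, φ, hiso⟩ := exists_LIso h hP hP' hl hl' H
  have h1 : Qs (blocks T P') (f p) := (hiso.Qs hp).2 ((hQ p hp).2 rfl)
  have h2 : f p = p := (hQ' (f p) (hiso.memP.2 ⟨p, hp, rfl⟩)).1 h1
  have h3 := hiso.invS hp
  rw [h2, hi, hi'] at h3
  exact hne h3.symm

/-- Boolean test for `Pts` together with membership of `267`. -/
def ptsB (P : List ℕ) : Bool :=
  decide (P.Pairwise (· < ·)) && decide (P.length = 65) && P.all (fun x => decide (x < 273)) &&
    decide (267 ∈ P)

theorem ptsB_spec {P : List ℕ} (h : ptsB P = true) : Pts P ∧ 267 ∈ P := by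
  unfold ptsB at h
  simp only [Bool.and_eq_true, decide_eq_true_eq, List.all_eq_true] at h
  obtain ⟨⟨⟨h1, h2⟩, h3⟩, h4⟩ := h
  exact ⟨⟨h1.imp fun h => Nat.ne_of_lt h, h2, h3⟩, h4⟩


/-! ### The data -/

/-- the lines of the plane, as masks of points -/
def LT : List ℕ := [
  115793856111341331857467735920185713421406907988821545813533107889564276555777,
  115795622985366468291364486831683518989543831312002527587608631771215423471618,
  115799156733416741159157988654679130125817677958364491135759679534517717303300,
  115806224229517286894744992300670352398365371251088418232061775061122304966664,
  115820359221718378365918999592652796943460757836536272424665966114331480293392,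
  115848629206120561308267014176617686033651531007431980809874348220749830946848,
  115905169174924927192963043344547464214033077349223397580291112433586532253760,
  116018249112533658962355101680407020574796170032806231121124640859259934867584,
  116244408987751122501139218352126133296322355399971898202791697710606740095232,
  116696728738186049578707451695564358739374726134303232366125811413300350550528,
  117601368239055903733843918382440809625479467602965900692794038818687571461120,
  119410647240795612044116851756193711397688950540291237346130493629462013282304,
  123029205244275028664662718503699514942107916414941910652803403251010896924672,
  130266321251233861905754451998711122030945848164243257266149222494108664209408,
  144740553265151528387937918988734336208621711662845950492840860980304198778880,
  173689017292986861352304852968780764563973438660051336946224137952695267917824,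
  289480664808426702199608557390092669389443904717807667167576216039741502652417,
  260533084209178876984011921900930149220460899785014363137185504129223810416642,
  246058300070718540101768134803764542724484196566469144207454216728405009235972,
  238821404914587942714038200268993955150224242709778241908858727517210877886472,
  235202708870494535309797446483425729042280185234725999827950836951231051595792,
  233393485083041546232259535165285600484470910637881038088515159399929463439392,
  232488811074387775176337684006021296649696414477416603819721980486976597393472,
  232036505127129612839213782697240070969275903520530071866735671672065537081472,
  231810336624373774875862542624300490916408952714261098374382307172497580097792,
  231697260137657963058614118266920949821913794855635810532390142770733257851392,
  231640718012117102367667853473572646671496348940299806935287536889742856553472,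
  231612448890413467221622033416796199063763128996626898564743159373762264041472,
  231598313358991227348949217972321323180518338292489981546828529429364862881792,
  231591246078571489110365085506234838303334079063870645665146549614786327355392,
  231587712195725185317177890775143962116476832630844546385303132896260247273472,
  231585945375618708120548500535656535453661360822486695274020601189202032361472,
  463281435593612246513015118979194965591114063287730926981516323601350901628929,
  463394514236695959010904881139061544776949430365396106657696889612709568970754,
  463196628227948459980051948109888339625390033476469213760445393796979138560004,
  463224899506316182107539363500405517992920368661365565622669234438686558519304,
  463175424377963866654345840778169913822734978038985606132789607453309469196304,
  463182491786442914481018349883602776900813084825864310017550442131846407913504,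
  463170123907539545768680343887067893958925164923926991746175997783264266813504,
  463171890860759011310880355675711032790596003415883429147640906874819419570304,
  492116489686538670221650816733284085731454076050514660302515730952874516021504,
  521064622423807622215337396196416552119013727052959853355837069153837401506304,
  470405804238364061309973559748599177578811873069925393156685533811150453474304,
  477643251527462106717212123472802808256615515431629108046365759855678199957504,
  464977615245396850385091601086454404237757728134425983843942706861647392149504,
  466786873541449934555773396673878469331819907089044675103190676011055015010304,
  463620697404846600085036165889318744526104496458903690602503439928294029410304,
  464073037860408671215602763810857783221528552983611148087217248246850687893504,
  929955223588955205724703708247812839672984235032542763513695877984882874908673,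
  928145979096361905345671720195605833119434791293572378566360555848530135351298,
  927241367202734139575406871894911042958764265008876682685282713880739732127748,
  926789081961109932378374455390792703624231944702269805149551385619900299018248,
  984232868945130032526785561996319448459226268219470880702392381154669711327248,
  955284957063742120968907009772355057078585933294227575681466502064317677961248,
  940811166764963573428086473630340039795506304433477068403579864149471457706048,
  933574602899395860312013542761488111599349277842034290114253648450686597202048,
  926350848705377833307785381476523144437279311406614943758261330368288251707648,
  926343781342393772614957138071425731068522416839409989978502962542560396968448,
  926340247713978905870419763913287950863864791040070267037467990347982122779648,
  926338480968013953198919917948418069193526728042246966678782318207289838798848,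
  926562870754390974268254166066656231425342674869139148990974004398563631566848,
  926449792973498998481654787366034781757075024461257972652230681808618133659648,
  926393254730881558325042377327689196300936434930071176071508875959940168040448,
  926364986902860443313674190061079931717197620452350851105717244234352694427648,
  1852676962353959633091451131105052755884033770228805387429726457053412867440641,
  1852675195075509379934293445622029640768304368448817479917084217907218642632706,
  1852687566024463691299205647216361115824854274753776646477917428007423130468356,
  1852680496910761409038170703677683820738618916204337145304452693920598047326216,
  1852729966957055220222616421620603649902004886506515681172988827121030438912016,
  1852701697377057173499876090879805087777170297893475811995272158192695458791456,
  1852899584437031156261869664031731775557628214594694013475313868767441765793856,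
  1852786506117045141519502712085369150604975978951272737504044107111571705561216,
  1853578274363588743041006345334835118178341044955698629360248081783749093622016,
  1853125851080323934909071052736920821915330898263947617128154521639218990547456,
  1856292814012627643623569323537611307023687599930920542758361023340402370937856,
  1854483120904843385200352541838308916338003801905828238029801578203440551561216,
  1867147452756059048807628022387656367409450470568320311680488758357801220182016,
  1859910440276559087792381891263331446530885143770671751980494457236999335059456,
  1910569527629898674818786849217325387340624337984714381234010239717751203577856,
  1881621477713478900797961304678165956496472054107828582692240671672919495049216,
  3734294933130898056496014322911700897106166788437681936414878786513630423678977,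
  3763242927826501737950610306535827743597676423645155557957740391116759603609602,
  3712583874978313204289707220936435012755180836520365816105150979969535199674372,
  3719820873652214124653356216842466724377978491718564731635066340068347676196872,
  3707156990412826309477313664977791777211294601653237370110351315243259882766352,
  3708965800094972034112084786592414280114876807312149390407886820413225811640352,
  3705799389298795267535032056452957732781313252815597003698187658034928964599872,
  3706251591719331698693724836856613358507203820842286551842593212614881942175872,
  3705459934021996299662651207574928793969988168857374074378941541416891733508352,
  3705573012126276001541763973144276905452113985027587275859858042660795019428352,
  3705375125201087765081366442102241986970977297265637257866153167391867271119872,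
  3705403394727157690551144633494579014841508439770676224291637397178031301199872,
  3705353926433253831897917084036722339857910368525858064947804662741769184612352,
  3705360992096074713634673604457391999409500749257300612177167988361300971364352,
  3705348623303902148140182911217690373442957263053818186481681959301316228431872,
  3705350389719607368574372041322857788330854838770319298066640333032894291279872,
  7411599220308936252633202546404965143630602001642398471665303084596816225763329,
  7411146465748586379870873368201433743159523869938112220828676173525275453161474,
  7414312434832789026723552825568706410448807782549040773980536286801005217054724,
  7412503073010512766916048076874135941738826237025876003326872744400292828676104,
  7425167777556884969947681226675580015860497518845133134979271589254220264767504,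
  7417930744372560738528121328591788570268702290674499797638659507602669756219424,
  7468589769610439954559846122495482318270442666618792357304553238183910859407424,
  7439641740399338230834196880277971535398307285378800137707803090312027338571904,
  7410697248333450067543988966093482837614119694951177957856033236699604423016704,
  7410695479760843287326413131876143789015807255523974442418560231814938820084224,
  7410707846828315577287390598020545392880230695043509517021418840899429020468224,
  7410700779008276042198003635099130801605410479945007668825191827547482862127104,
  7410750250513358994934762284287634094515222479833185968990910681047824657813504,
  7410721980850797751024006576133818873455805373331211879551338329459489853415424,
  7410919867679928010184874710995808985968657463416395406446341968046951801831424,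
  7410806789434082258647297356308477095770771187564462401902552777919018498555904,
  14821415692145294559683351818369404648107988506143395413031056392679071512788993,
  14821443961590596436611631820578657372795490947370481518408572320794925561020418,
  14821500500642960024737368502191458666408105892910980627964699445509031999832068,
  14821613578828567118122878640311480323918531503713445931467433819656071555317768,
  14821389192676095975519683466399520828399814607792249814585183510321597528932368,
  14821390957799409157444924523427654178824302174837700658850530793562831419867168,
  14821394490634190410987027187439884902482963774134613125416914338152747926421568,
  14821401557597830362908215624545189770762721737259068058434594815110667361648768,
  14828624483167776462935178111239809175267353375143199785543735158608387335258368,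
  14835861461138123748961300871613065147424211227867149745699661966971655113671168,
  14850335458489296402359531745244037056195376888229597048687850473562868279149568,
  14879283473896880749828984014400441868032359543397594954237270720177981064480768,
  14821840618648595251866073360625193991689057924848815671558162310206496568250368,
  14822292489785418905651483634353930327165753921271014681023787186078005095047168,
  14823196894626715505154104178398282489746334622745297929251549314814222673133568,
  14825006035593133350125210783663512444129831932232910752687587066007441637408768,
  29644584096255122184520888553009573993731426045148411859510813361508227083141121,
  29646393347757293384810676449068759774041054926047602398243739822013420817874946,
  29643227157628490067455857029228100281679913979273462697516045934759794339479556,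
  29643679470504032867528309772549497583776542494521500879940352945734632601550856,
  29671722868787764525821609895234196722611677229262467315309350892540158835425296,
  29700670892822503730458191712628115565235404632437255709170365511861538142552096,
  29650011850761650652781031956058354268194457638880065839219599290484806953992256,
  29657248856770335453940177770988496532414090820612715471918670140667445618147456,
  29642781939749033027517703235411654031707911226524864264427119451893888087818496,
  29642789034743856279025886401534187392863312605369803281274612664424512316637696,
  29642776618501967778206526126327915853841591186158496330342948161768732794029056,
  29642778392250673591085043113665469202402870651365013180393541836368397227001856,
  29642888364690338013764416751045471188901028498847798775283860899338806702903296,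
  29643001884607510037889094826826594932229632115092411964049241055283204434436096,
  29642803224737294024766825259167378857433517700747706237438099478068569541984256,
  29642831604716587030798086727850592293782695424839814665619360233703956637843456,
  59285563851891080667972800503023231089061851961218069403926933677380870986530817,
  59285556812111491938164000511386769853143668793894992373787835932259646481367042,
  59285553230108507947897824728300567513965521529556954698432680961251911126745092,
  59285551470169929502569111699694525622211814532331679048580272419599679680937992,
  59285776287642055196962839213987565653980142902079190421793316737120202418814992,
  59285663651141780887247218207713997206768848946667549574874131986420062549442592,
  59285606339040327763032814915463786971052398552755561500702536625946884181065792,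
  59285578179915654106674121897428198901308454616889119796874687119065286457688192,
  59289168192402404608084229217879026464041127485741274838497780909586929223336192,
  59287358941115917885506534537170067056122460260208500528987788603752908266209792,
  59286454315230045070073424576445763159042219065514158674157307503021678427374592,
  59286002002408447975580986119092767776891134217715411891258801608437936213460992,
  59343445735849987155868570820371040281388997659447406615219956534454271288020992,
  59314497715266095103479127988184999980699357762865913897827621742804844177006592,
  59300023701091917386333901160528160877699155052532574273437003209606653865377792,
  59292786695945945909869574079509560634463831026174783636917330206122505796616192,
  118571325756291965529094319177202799319396226884782953796005996877740543257346049,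
  118571212567651884848708900089149064878226968679427077119958152236807708393603074,
  118571156801541415765012110591410071594867155418296465640376833330626159150366724,
  118571128090276639470050288391314571013697447315956652561361459259098245434966024,
  118571113527591795452196540556915566496601449627404345757537160104007936935723024,
  118571106453301790409672451863912208094028370905524368747296843062553379384328224,
  118571102967919886091941402520303521013818383155322821869278067663896809371074624,
  118571101173465837573506288632797552227495276067594407936754448487944918711402624,
  118628995424494845501865738312818969038300892428787595487215151702209298929287424,
  118600047401755842303403860619935565269597986452389296921888517658485157238669824,
  118585573393624061798327141316336304019840006765448998030592540766723529102132224,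
  118578336386328032936182746914188643442746160760494133697819015815546371418753024,
  118574717881854475450494754252891577104033033424966653160413915255721917497217024,
  118572908630433287750590886897086364368489080616865545612293661973218251644084224,
  118572004004925051469023591940611410540379355178427496761663771900222643230490624,
  118571551691969049665139567290477181754310905064831828686056977874853759450906624,
  237156672770904090587778217569936251889330743551687777410533930971324899993321473,
  237149435767052616161422306977165745324274590017858164726887387767470677794226178,
  237200094803073690784201556477799363950842299472378780942984679499413658296909828,
  237171146781195826194286732198220077981662680184160240648739105724609488738058248,
  237143103383835314533786773739818503805392255677645752557828861590389693802872848,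
  237142651071101311040633749325784364266946462310799665537945826039164776948432928,
  237145817260840879302719249743466311762486903445083777668355089292973086043275328,
  237144008009475191180099438765953094083575333671781066055320210847383023643525248,
  237142255738841408979086439867635386461933095594791864809522626108798085160763648,
  237142227911000140363430868301931193842031004699923063072166035089095268155785728,
  237142425024875801833548228627074631690562023708333642886908042699074709783446528,
  237142312057091597970548543431005967822862631803475356223335349722812354987624448,
  237142202319324709550899227750097250211732729156203078617494995169732951436955648,
  237142200580084656462039063256241900939501318935201542728472984702032792084553728,
  237142212899701839589044882843537305899890089061664490651586154361312273596694528,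
  237142205839215333301472328874026702510779966217387378470904290769717604704616448,
  474284454068963442043518422982673571110832710237293519292172707340943866839695361,
  474284425792515399229270580009177168336668101887226550053447094834680756011270146,
  474284623727687083859138450093818403997962228929022775960107882898706908202401796,
  474284510621869637652052100149713924156916755079994848771279044650858361418416136,
  474284401270597570358583432975344092277230303280201687017288590864587032331550736,
  474284399393322985281120060808341729298716873782569510672098714067121125525028896,
  474284412534247292383606050557427237716427737435003560745822093003767277244383296,
  474284405025147372387865144332225666110862115330062919829224204276279497099051136,
  474298871527255747207209671971702865627818483177240225270826103366598555446804736,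
  474291634521651481332829217868746913533670916124740199737507373781180692125712896,
  474342293560881480709620912637297837219630496306037168804402166220242859455415296,
  474313345538464318457721584762717415252378363264504599235918568419385644928731136,
  474285302142607023029420920002595739041600970543284621755914501495032222375284736,
  474284849829327082364706734726980946199052965724740124371150321670234186168016896,
  474288016022286676196536172653900340978533431268696112251141448170846888833335296,
  474286206769166906981372187981715566121452532661467221685630868066136903207387136,
  948576032037725735690125560532438619887469593509064569962659990847730792420868097,
  948583269043276002693481154278272070544117886582900350814981711342289909469675522,
  948597743054620124030821691557583009894951716439304907737639841736629842784288772,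
  948626691076821192044244043559095866134166909846664987294690882122433695489982472,
  948569247345808944462970374351484969584937183943020064422894738714268134964985872,
  948569699658224483586023917984857348486549276698356189335412194188201996152995872,
  948570604286952959122200968216121953475129056499043395649564200312593908454391872,
  948572413536615115614415141402691565468289460216398093849877281783861505628831872,
  948568823315450802906088766742993314586631559431528651977828894547803570769494272,
  948568851578102092627783914941588882308680220485655591446814448588983963625718272,
  948568908165520392894668654615538293612422259021496871275261933932777456898409472,
  948569021216125551781443362627065647646740645380324417764024165754061175520233472,
  948568797019797233951219374666190775362351869397251048471159870733052040397852672,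
  948568798676216350600543490489587717901193080470230591170797918442286273102159872,
  948568802982906117075196603291615009132624076349000586761769073654385558841475072,
  948568809608582583672492698786625102025401905809265332408446761967837816773967872,
  1897137597242004772811653213276264838491759588823665498135211429893267679543820289,
  1897137604419820999803519407002856402664600539131414109754089349321932565446131714,
  1897137592272747383381213412062777116893284033562368430830734847980181661941760004,
  1897137594481306220942639805384032908056668816236794028179937910533189557284765704,
  1897137703149302439654390253790879988187296057248226055120587226773193258117890064,
  1897137816234416333488993470808348370186689664674384951623842378305045954750840864,
  1897137618361348568175318724095702842917990964785372078181603930121226010272727104,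
  1897137646658508590530850425207086647856831533671691767760573246248084183162290304,
  1897139399316020978018688182836858898329451345713417562123481692841214606634385664,
  1897141208567853410217589053052160019935445555434706599518620629389665681488740864,
  1897138042378764250669564887015334837437912230520871137233013581152798758776341504,
  1897138494693339955519342682088260148699255214766763534810773359736055633601890304,
  1897166538086525256064580308175773161839951509192855884571287797447867749131096064,
  1897195486108861966309368890142897648388537135636366411189587894221840765141131264,
  1897144827069873823181363781834064465575696735506092979660682458706342771565871104,
  1897152064075559100542939368329193308734089205269354631429580627082480532601339904,
  3794275632444676549776285835995493433657515833857080020917853136326339513372639233,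
  3794276084755799698075771686261289518150401520466492605495436029600434321469997058,
  3794276989380634143615540951849077890683477440757473882985782167056797291096571908,
  3794278798631597117842952531725582729182861052281009341662716231166388973286195208,
  3794282417134170129806412106377181782184211331335453587516717385832874796847726608,
  3794289654139639648608423554179295072729484240066197283125762016650637764802379808,
  3794304128150740347176637988949538687523091304666611002873901971173713753191481408,
  3794333076173022722854417232683619517839918224475147232681610686546303023925166208,
  3794275182778648110056518078754641324752606033009909153070315947529777030157566208,
  3794275184103783829889372572672703165477933970952861982415293729018039641514705408,
  3794275187416621339163504535410592809750840963512436605921057686501125008899703808,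
  3794275194373581762040282768721947997839895817614747636790349499395754222089668608,
  3794275208453150838854727162655439375774684209273076335880905412951100426839134208,
  3794275236695103629908374691773811224504214023739648848480293076643830183936401408,
  3794275293220394415146469171543136663733994641767375167025208476270164464057335808,
  3794275406291706499612917289666623326697936382588504992839973809261486410305732608,
  7588550360256754183279148073529370729071901715047420004889892225542594864082911231,
  7588550360256754183279148073529370729071901715047420004889892225542594868377747456,
  7588550360256754183279148073529370729071901715047420004889892225542876334764589056,
  7588550360256754183279148073529370729071901715047420004889892243989057462815686656,
  7588550360256754183279148073529370729071901715047420004891101132915465419548000256,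
  7588550360256754183279148073529370729071901715047420084116845813987317828452089856,
  7588550360256754183279148073529370729071901715052612222520264538906787766868115456,
  7588550360256754183279148073529370729071902055324594628969820861288671799521837056,
  7588550360256754183279148073529370729094202119963583707092964480440635793820614656,
  7588550360256754183279148073529372190551238300751807585433189223552966158509408256,
  7588550360256754183279148073625150238874382437791898490401953833235746403286777856,
  7588550360256754183279154350535325144448547497189446523359414003921868132980883456,
  7588550360256754183690517935757936852929880174897334423469160089595545365885485056,
  7588550360256781142814439084838863885548246439038756015788630799706681001855942656,
  7588550362023574288110865252472873562799733211244230264621088643091719961765216256,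
  7588666150579144434696187314931081916236836469204601748578312725004996575919865856,
  15176984928424271050362872576073732770235950160110174369215744993501181815036051456]

/-- unital 0 -/
def P0 : List ℕ := [
  1, 4, 6, 13, 14, 21, 22, 26, 29, 31, 37, 40, 43, 46, 47, 48, 51, 52, 53, 62, 64, 66, 70, 78,
  79, 84, 85, 89, 91, 93, 98, 121, 128, 130, 133, 137, 138, 145, 146, 153, 155, 158, 161, 170,
  171, 172, 175, 176, 177, 180, 183, 186, 194, 196, 198, 202, 203, 208, 209, 217, 221, 223,
  230, 253, 267]

/-- unital 1 -/
def P1 : List ℕ := [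
  3, 8, 10, 14, 15, 17, 19, 20, 21, 24, 33, 34, 38, 44, 46, 53, 55, 57, 58, 61, 65, 66, 71, 72,
  73, 82, 83, 89, 90, 92, 98, 121, 135, 138, 139, 140, 142, 144, 145, 149, 151, 156, 162, 165,
  166, 168, 170, 177, 179, 185, 189, 190, 195, 197, 198, 204, 205, 214, 215, 216, 221, 222,
  230, 253, 267]

/-- unital 2 -/
def P2 : List ℕ := [
  2, 3, 4, 6, 8, 20, 21, 22, 27, 28, 44, 48, 53, 54, 57, 61, 65, 67, 70, 71, 77, 80, 81, 83,
  89, 94, 105, 112, 115, 117, 120, 124, 128, 130, 134, 135, 140, 144, 145, 146, 152, 159, 168,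
  177, 178, 180, 185, 189, 194, 195, 197, 199, 201, 212, 213, 215, 218, 221, 237, 241, 244,
  247, 248, 252, 267]

/-- unital 3 -/
def P3 : List ℕ := [
  0, 4, 6, 7, 15, 19, 21, 22, 24, 25, 45, 48, 53, 55, 57, 61, 65, 66, 67, 69, 74, 80, 83, 86,
  92, 93, 104, 112, 114, 117, 120, 124, 128, 130, 131, 132, 139, 145, 146, 151, 156, 157, 169,
  177, 179, 180, 185, 189, 193, 197, 198, 199, 206, 210, 212, 215, 216, 217, 236, 241, 244,
  246, 248, 252, 267]

/-- unital 4 -/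
def P4 : List ℕ := [
  3, 4, 5, 8, 10, 27, 32, 40, 41, 42, 44, 48, 53, 58, 61, 62, 64, 65, 70, 77, 79, 94, 101, 105,
  108, 109, 111, 112, 117, 120, 123, 127, 128, 129, 135, 140, 142, 159, 164, 168, 172, 173,
  174, 177, 180, 185, 186, 190, 194, 196, 197, 201, 203, 218, 225, 232, 233, 235, 237, 241,
  244, 251, 252, 255, 267]

/-- unital 5 -/
def P5 : List ℕ := [
  3, 4, 8, 9, 10, 16, 21, 22, 26, 30, 35, 36, 45, 46, 47, 49, 50, 55, 57, 61, 66, 67, 69, 71,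
  74, 82, 96, 98, 100, 101, 109, 117, 128, 135, 140, 141, 142, 145, 146, 148, 154, 158, 160,
  167, 169, 170, 171, 179, 181, 182, 185, 189, 193, 195, 198, 199, 206, 214, 224, 225, 228,
  230, 233, 241, 267]

/-- unital 6 -/
def P6 : List ℕ := [
  2, 6, 11, 12, 13, 17, 24, 29, 30, 31, 35, 36, 39, 40, 45, 49, 50, 51, 53, 59, 77, 86, 99,
  101, 103, 107, 108, 114, 117, 120, 121, 123, 130, 134, 136, 137, 143, 149, 153, 154, 155,
  156, 160, 163, 167, 169, 172, 177, 181, 182, 183, 191, 201, 210, 225, 227, 231, 232, 239,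
  241, 246, 252, 253, 255, 267]

/-- unital 7 -/
def P7 : List ℕ := [
  3, 7, 8, 9, 14, 18, 19, 21, 24, 28, 32, 36, 41, 46, 47, 50, 52, 53, 59, 63, 78, 85, 105, 114,
  128, 130, 136, 139, 142, 144, 147, 149, 153, 155, 165, 167, 169, 172, 175, 178, 180, 183,
  188, 190, 192, 193, 195, 196, 204, 215, 216, 218, 219, 223, 227, 228, 230, 231, 235, 240,
  248, 252, 253, 255, 267]

/-- unital 8 -/
def P8 : List ℕ := [
  1, 4, 7, 10, 11, 16, 17, 26, 28, 31, 32, 35, 38, 44, 45, 54, 55, 56, 59, 61, 67, 72, 74, 75,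
  76, 80, 81, 83, 87, 88, 100, 107, 108, 109, 111, 112, 116, 118, 119, 127, 135, 156, 160, 187,
  193, 195, 196, 201, 205, 210, 214, 216, 218, 223, 227, 228, 230, 234, 238, 241, 245, 248,
  253, 255, 267]

/-- unital 9 -/
def P9 : List ℕ := [
  4, 7, 8, 10, 12, 17, 19, 23, 28, 31, 32, 35, 43, 45, 47, 48, 52, 54, 56, 59, 72, 83, 111,
  116, 130, 135, 138, 139, 141, 144, 145, 150, 153, 156, 160, 165, 170, 172, 173, 177, 182,
  183, 187, 190, 192, 193, 195, 196, 202, 209, 216, 218, 219, 223, 227, 228, 230, 231, 237,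
  246, 248, 252, 253, 255, 267]

/-- unital 10 -/
def P10 : List ℕ := [
  3, 4, 11, 13, 15, 17, 25, 26, 27, 28, 35, 36, 40, 42, 44, 54, 59, 60, 61, 62, 65, 70, 72, 74,
  78, 84, 89, 92, 94, 95, 97, 102, 105, 109, 111, 115, 120, 121, 123, 126, 129, 130, 136, 140,
  141, 145, 165, 166, 170, 171, 175, 182, 196, 199, 200, 201, 205, 212, 224, 227, 234, 238,
  239, 243, 267]

/-- unital 11 -/
def P11 : List ℕ := [
  4, 31, 32, 36, 37, 44, 46, 53, 55, 59, 62, 63, 67, 68, 69, 72, 75, 80, 83, 88, 94, 95, 103,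
  104, 106, 109, 110, 113, 115, 117, 118, 124, 128, 155, 160, 161, 164, 168, 170, 177, 179,
  186, 187, 191, 192, 193, 199, 204, 207, 212, 215, 218, 219, 220, 227, 233, 234, 236, 238,
  241, 242, 245, 247, 248, 267]

/-- unital 12 -/
def P12 : List ℕ := [
  4, 5, 6, 9, 14, 16, 19, 22, 23, 25, 32, 36, 38, 40, 45, 60, 69, 81, 84, 89, 93, 95, 96, 105,
  106, 110, 111, 112, 119, 124, 125, 127, 132, 144, 149, 152, 156, 158, 161, 168, 171, 174,
  175, 177, 182, 188, 189, 190, 196, 197, 199, 200, 207, 209, 210, 214, 215, 216, 225, 229,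
  231, 233, 236, 253, 267]

/-- unital 13 -/
def P13 : List ℕ := [
  0, 1, 2, 10, 14, 16, 19, 20, 22, 29, 34, 35, 36, 43, 46, 59, 64, 65, 70, 73, 76, 89, 96, 98,
  99, 104, 108, 113, 114, 116, 118, 127, 130, 137, 139, 140, 143, 145, 149, 157, 158, 159, 164,
  177, 180, 187, 188, 189, 198, 211, 214, 217, 222, 223, 224, 233, 235, 237, 238, 243, 247,
  252, 253, 255, 267]

/-- unital 14 -/
def P14 : List ℕ := [
  1, 9, 10, 11, 13, 16, 17, 18, 22, 26, 32, 33, 35, 37, 47, 52, 56, 58, 59, 62, 64, 70, 73, 74,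
  75, 80, 81, 82, 91, 93, 98, 121, 129, 131, 135, 139, 142, 144, 149, 152, 154, 156, 162, 165,
  168, 173, 174, 179, 181, 182, 185, 190, 195, 197, 200, 201, 205, 210, 211, 214, 216, 222,
  230, 253, 267]

/-- unital 15 -/
def P15 : List ℕ := [
  3, 4, 6, 11, 15, 17, 21, 22, 23, 27, 34, 52, 53, 59, 61, 62, 66, 68, 71, 76, 77, 91, 98, 104,
  108, 110, 111, 114, 118, 122, 125, 127, 129, 150, 151, 152, 157, 158, 160, 165, 167, 168,
  172, 178, 180, 181, 182, 184, 193, 203, 204, 205, 207, 209, 213, 217, 220, 222, 225, 228,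
  231, 238, 239, 248, 267]

/-- unital 16 -/
def P16 : List ℕ := [
  0, 2, 3, 4, 11, 21, 32, 34, 42, 46, 47, 48, 51, 54, 58, 61, 65, 69, 70, 71, 78, 80, 101, 103,
  106, 107, 111, 115, 117, 118, 120, 127, 128, 132, 134, 135, 143, 145, 164, 166, 170, 171,
  174, 178, 180, 183, 185, 190, 193, 194, 195, 197, 202, 212, 225, 227, 235, 238, 239, 241,
  242, 247, 251, 252, 267]

/-- unital 17 -/
def P17 : List ℕ := [
  4, 19, 20, 26, 27, 29, 32, 34, 36, 42, 47, 53, 55, 56, 58, 60, 64, 66, 70, 72, 77, 85, 87,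
  88, 90, 94, 102, 113, 118, 120, 121, 127, 133, 144, 145, 147, 149, 157, 160, 161, 166, 168,
  173, 177, 178, 180, 181, 191, 194, 195, 196, 202, 207, 208, 211, 214, 215, 221, 231, 241,
  242, 243, 247, 255, 267]

/-- unital 18 -/
def P18 : List ℕ := [
  4, 6, 12, 14, 15, 20, 21, 23, 29, 31, 32, 39, 42, 44, 46, 49, 53, 55, 59, 60, 64, 70, 71, 77,
  79, 84, 86, 91, 92, 93, 99, 120, 128, 131, 133, 134, 139, 144, 152, 155, 157, 158, 163, 166,
  168, 169, 175, 178, 179, 180, 184, 189, 199, 220, 229, 232, 235, 238, 239, 240, 243, 244,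
  245, 254, 267]

/-- unital 19 -/
def P19 : List ℕ := [
  5, 9, 10, 13, 15, 19, 21, 24, 28, 29, 32, 33, 36, 41, 47, 49, 51, 53, 54, 57, 65, 82, 85, 92,
  94, 95, 96, 98, 99, 105, 110, 125, 128, 147, 148, 157, 158, 159, 161, 162, 163, 168, 175,
  188, 196, 200, 203, 204, 206, 210, 212, 217, 220, 221, 224, 225, 229, 232, 238, 240, 242,
  244, 247, 248, 267]

/-- unital 20 -/
def P20 : List ℕ := [
  0, 5, 6, 13, 15, 16, 17, 19, 23, 31, 35, 43, 44, 45, 47, 49, 51, 57, 58, 60, 66, 70, 71, 75,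
  76, 95, 99, 112, 119, 122, 123, 126, 133, 145, 150, 152, 156, 157, 160, 161, 164, 170, 173,
  185, 197, 201, 202, 203, 205, 213, 215, 218, 220, 223, 224, 227, 230, 233, 235, 241, 245,
  246, 247, 249, 267]

set_option maxHeartbeats 0 in
theorem table_LT : Table LT := by
  apply planeK_beq
  decide +kernel

set_option maxHeartbeats 0 in
theorem chk_P0 : chk LT P0 (nat_lit 267) = nat_lit 2115072 := by
  have h : Nat.beq (chk LT P0 (nat_lit 267)) (nat_lit 2115072) = true := by decide +kernel
  exact Nat.eq_of_beq_eq_true h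

set_option maxHeartbeats 0 in
theorem chk_P1 : chk LT P1 (nat_lit 267) = nat_lit 2034432 := by
  have h : Nat.beq (chk LT P1 (nat_lit 267)) (nat_lit 2034432) = true := by decide +kernel
  exact Nat.eq_of_beq_eq_true h

set_option maxHeartbeats 0 in
theorem chk_P2 : chk LT P2 (nat_lit 267) = nat_lit 2088960 := by
  have h : Nat.beq (chk LT P2 (nat_lit 267)) (nat_lit 2088960) = true := by decide +kernel
  exact Nat.eq_of_beq_eq_true h

set_option maxHeartbeats 0 in
theorem chk_P3 : chk LT P3 (nat_lit 267) = nat_lit 2024448 := by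
  have h : Nat.beq (chk LT P3 (nat_lit 267)) (nat_lit 2024448) = true := by decide +kernel
  exact Nat.eq_of_beq_eq_true h

set_option maxHeartbeats 0 in
theorem chk_P4 : chk LT P4 (nat_lit 267) = nat_lit 2129664 := by
  have h : Nat.beq (chk LT P4 (nat_lit 267)) (nat_lit 2129664) = true := by decide +kernel
  exact Nat.eq_of_beq_eq_true h

set_option maxHeartbeats 0 in
theorem chk_P5 : chk LT P5 (nat_lit 267) = nat_lit 2039040 := by
  have h : Nat.beq (chk LT P5 (nat_lit 267)) (nat_lit 2039040) = true := by decide +kernel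
  exact Nat.eq_of_beq_eq_true h

set_option maxHeartbeats 0 in
theorem chk_P6 : chk LT P6 (nat_lit 267) = nat_lit 2010816 := by
  have h : Nat.beq (chk LT P6 (nat_lit 267)) (nat_lit 2010816) = true := by decide +kernel
  exact Nat.eq_of_beq_eq_true h

set_option maxHeartbeats 0 in
theorem chk_P7 : chk LT P7 (nat_lit 267) = nat_lit 2087424 := by
  have h : Nat.beq (chk LT P7 (nat_lit 267)) (nat_lit 2087424) = true := by decide +kernel
  exact Nat.eq_of_beq_eq_true h

set_option maxHeartbeats 0 in
theorem chk_P8 : chk LT P8 (nat_lit 267) = nat_lit 2091264 := by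
  have h : Nat.beq (chk LT P8 (nat_lit 267)) (nat_lit 2091264) = true := by decide +kernel
  exact Nat.eq_of_beq_eq_true h

set_option maxHeartbeats 0 in
theorem chk_P9 : chk LT P9 (nat_lit 267) = nat_lit 2084352 := by
  have h : Nat.beq (chk LT P9 (nat_lit 267)) (nat_lit 2084352) = true := by decide +kernel
  exact Nat.eq_of_beq_eq_true h

set_option maxHeartbeats 0 in
theorem chk_P10 : chk LT P10 (nat_lit 267) = nat_lit 2065920 := by
  have h : Nat.beq (chk LT P10 (nat_lit 267)) (nat_lit 2065920) = true := by decide +kernel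
  exact Nat.eq_of_beq_eq_true h

set_option maxHeartbeats 0 in
theorem chk_P11 : chk LT P11 (nat_lit 267) = nat_lit 2232576 := by
  have h : Nat.beq (chk LT P11 (nat_lit 267)) (nat_lit 2232576) = true := by decide +kernel
  exact Nat.eq_of_beq_eq_true h

set_option maxHeartbeats 0 in
theorem chk_P12 : chk LT P12 (nat_lit 267) = nat_lit 2029824 := by
  have h : Nat.beq (chk LT P12 (nat_lit 267)) (nat_lit 2029824) = true := by decide +kernel
  exact Nat.eq_of_beq_eq_true h

set_option maxHeartbeats 0 in
theorem chk_P13 : chk LT P13 (nat_lit 267) = nat_lit 2149632 := by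
  have h : Nat.beq (chk LT P13 (nat_lit 267)) (nat_lit 2149632) = true := by decide +kernel
  exact Nat.eq_of_beq_eq_true h

set_option maxHeartbeats 0 in
theorem chk_P14 : chk LT P14 (nat_lit 267) = nat_lit 2022912 := by
  have h : Nat.beq (chk LT P14 (nat_lit 267)) (nat_lit 2022912) = true := by decide +kernel
  exact Nat.eq_of_beq_eq_true h

set_option maxHeartbeats 0 in
theorem chk_P15 : chk LT P15 (nat_lit 267) = nat_lit 2090496 := by
  have h : Nat.beq (chk LT P15 (nat_lit 267)) (nat_lit 2090496) = true := by decide +kernel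
  exact Nat.eq_of_beq_eq_true h

set_option maxHeartbeats 0 in
theorem chk_P16 : chk LT P16 (nat_lit 267) = nat_lit 2049792 := by
  have h : Nat.beq (chk LT P16 (nat_lit 267)) (nat_lit 2049792) = true := by decide +kernel
  exact Nat.eq_of_beq_eq_true h

set_option maxHeartbeats 0 in
theorem chk_P17 : chk LT P17 (nat_lit 267) = nat_lit 2054400 := by
  have h : Nat.beq (chk LT P17 (nat_lit 267)) (nat_lit 2054400) = true := by decide +kernel
  exact Nat.eq_of_beq_eq_true h

set_option maxHeartbeats 0 in
theorem chk_P18 : chk LT P18 (nat_lit 267) = nat_lit 2002752 := by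
  have h : Nat.beq (chk LT P18 (nat_lit 267)) (nat_lit 2002752) = true := by decide +kernel
  exact Nat.eq_of_beq_eq_true h

set_option maxHeartbeats 0 in
theorem chk_P19 : chk LT P19 (nat_lit 267) = nat_lit 2064000 := by
  have h : Nat.beq (chk LT P19 (nat_lit 267)) (nat_lit 2064000) = true := by decide +kernel
  exact Nat.eq_of_beq_eq_true h

set_option maxHeartbeats 0 in
theorem chk_P20 : chk LT P20 (nat_lit 267) = nat_lit 2086656 := by
  have h : Nat.beq (chk LT P20 (nat_lit 267)) (nat_lit 2086656) = true := by decide +kernel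
  exact Nat.eq_of_beq_eq_true h

/-- the 21 unitals -/
def Ps : Fin 21 → List ℕ :=
  ![P0, P1, P2, P3, P4, P5, P6, P7, P8, P9, P10, P11, P12, P13, P14, P15, P16, P17, P18, P19, P20]

/-- their invariants -/
def vs : Fin 21 → ℕ :=
  ![2115072, 2034432, 2088960, 2024448, 2129664, 2039040, 2010816,
    2087424, 2091264, 2084352, 2065920, 2232576, 2029824, 2149632,
    2022912, 2090496, 2049792, 2054400, 2002752, 2064000, 2086656]

theorem chk_Ps (i : Fin 21) : chk LT (Ps i) 267 = vs i := by
  fin_cases i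
  · exact chk_P0
  · exact chk_P1
  · exact chk_P2
  · exact chk_P3
  · exact chk_P4
  · exact chk_P5
  · exact chk_P6
  · exact chk_P7
  · exact chk_P8
  · exact chk_P9
  · exact chk_P10
  · exact chk_P11
  · exact chk_P12
  · exact chk_P13
  · exact chk_P14
  · exact chk_P15
  · exact chk_P16
  · exact chk_P17
  · exact chk_P18
  · exact chk_P19
  · exact chk_P20

theorem pts_Ps (i : Fin 21) : Pts (Ps i) ∧ 267 ∈ Ps i := by
  refine ptsB_spec ?_
  revert i
  decide +kernel

theorem vs_ne_zero : ∀ i, vs i ≠ 0 := by decide +kernel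

theorem vs_ne : ∀ i j, i ≠ j → vs i ≠ vs j := by decide +kernel

end Unitals

end

/-- There is a projective plane of order 16 containing 21 unitals whose associated
`2-(65,5,1)` designs are pairwise non-isomorphic. -/
theorem exists_plane_with_21_nonisomorphic_unital_designs :
    ∃ (Pl : ProjPlane) (U : Fin 21 → Set Pl.Point),
      Pl.HasOrder 16 ∧
      (∀ i, Pl.IsUnital 4 (U i)) ∧
      (∀ i j, i ≠ j →
        ¬ DesignIso (Pl.unitalBlocks 4 (U i)) (Pl.unitalBlocks 4 (U j))) := by
  refine ⟨Unitals.plane Unitals.LT Unitals.table_LT, fun i => Unitals.ptSet (Unitals.Ps i),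
    Unitals.plane_order _ _, fun i => ?_, fun i j hij => ?_⟩
  · exact Unitals.isUnital _ (Unitals.pts_Ps i).1
      (Unitals.chk_spec (Unitals.chk_Ps i) (Unitals.vs_ne_zero i)).1
  · exact Unitals.not_iso _ (Unitals.pts_Ps i).1 (Unitals.pts_Ps j).1 (Unitals.pts_Ps i).2
      (Unitals.chk_Ps i) (Unitals.chk_Ps j)
      (Unitals.vs_ne_zero i) (Unitals.vs_ne_zero j) (Unitals.vs_ne i j hij)
end

section
/- There exist a projective plane Π of order 16 and a unital U in Π such that the associated 2-(65,5,1) design of U admits no parallel class, i.e., there is no set of 13 pairwise disjoint blocks whose union is the whole point set of the design. -/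
namespace UnitalSearch


/-- Bit masks of the 273 lines: bit `p` of entry `l` says that point `p` is on line `l`. -/
def lineTab : List Nat := [
  926393253058522368235291931655779445989886601761785304069323400317185709604867,
  118578337268444007963240823603809048807633905712964526017601738764547381413281797,
  7588550360374083884345102085476328981937060246126215687831162208221773664926892041,
  948568809166872476134438409970163598480449375902054340558346032149571160753831953,
  237145824328203870073180314047210360268633380445603937122832791356798393559023649,
  2534682230437104360824361713729,
  3794277017649337941132613523394839538870222021897859464077523269916053743056715905,
  29642775288190991321017181968195795852803962398846568093765829596330228524779777,
  246058193080380918954343480568562833815815297622319828201111271416744400388609,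
  59285779380487084196752687823152294561268286457542253368090103479127246377059329,
  3705346855594144684471272725067354663228649210027792648185247993856556450451457,
  1881621477713478875087346064694286429385996502281025607401010505472133052768257,
  7468589976669517688986049166475833818727913738593159011446877108301643827396609,
  14937179511829469605736418716057410492535280449004892936108544813120194921758721,
  1897138494745207524970437574541014402526410436080120572336531625848894238203314177,
  474284851595743205748886330956210557167770145249891412728035705835479672320688129,
  7410934002389048025737624588343785225792352187265500860910426777575404223987718,
  14823196701377791492744276863448818443880249767548623588244942753061941308030986,
  1897137618334604511191869233964661867490244514977078715235199261644954960280944658,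
  463168412169976371868751383760895464504430725480688255278756496549111222239266,
  59286009071468276335996766944846936722879550687709035966763099077576374675046466,
  231587712168761999037821618078265732179489155003255158369708127296774572343426,
  7588550473335183693871438713964324967834218706349678597105563750048349771549638914,
  237257990847692256733632925687691428865947886436307996131221950256693483023630850,
  29700670889479447204627536197307522915380970492576001520424603667248837474391042,
  948568796798968350702466975283124156818541146543213644727763452765431946746529794,
  3794278798651871023139125631908206602589787184390327583529101438256895793716797442,
  3734295761330349686592878512548968937759493904247731019585351328674084261216258,
  1859910875086164268455757081590014349666079695031126009722232593166018293071874,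
  118585573500608291409313954212473187095283402203011896052054553241202197960589314,
  713449621781116420035849737070438370521382914,
  231640731387568808812537740841573476641300670879040284382341858423427802595340,
  14821387422389966153194462593926574043444846447742536318595211587776970481500180,
  948597743057854475132351828212400662391295499329741553075019683963839857126015012,
  29642775066473232441508956282575746490846151677435670835735354142718913122664516,
  3719822633602587543937239319044412435632442999977106515669231383458966558212228,
  3794275180183591167726591950326969954927172883334964458566436281944268420570677508,
  474342293560719767204982710478853921152051058788757925276184634070456156750348804,
  237143103825432922210441417386185555792587947934575380964999128937582668502270980,
  7588550367324250492803940470853228259802514007245809389373583247482131438437926916,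
  59285691044172827259637383214027947032469542195633310840941538241038733337956356,
  2922289650815452856466840522447878464032785571844,
  466786859737931118514448611394885827815983324035121351044929197304969907159044,
  928149499014794630723773739845260878990218166630736571418875181850594665103364,
  1897138042404859797337683991136939970191867772066969168440443058644768730856292356,
  59285550131649017603827102784560443379111364730300756234307121838156050121883672,
  3794289654362113077495134269054988909090928805931924656130279418578372908457918504,
  237149439297301773336987416307390860718218667006046730083524004398677910462922824,
  948626698144101190121143397654605995432031729678917067032389664749709779227639944,
  464074749547442314463838164930207461101810067347065130574402434081661147676936,
  1897141208566978896947968713503423562180942628032920947788142497037800585891414536,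
  49027884686295428710761180282660282092220177130310337544,
  926364983667245591678515354812925556465663970501500059657298700793605858019336,
  118600047456562254508167677534495626205099421060822975302875874799179999028973576,
  29642888806389045586246693549799381107369741837910615167593083514141400331591688,
  474400189605392397800752614113250336275255914104669543663212855916363408713220104,
  7410693714639162336651228488487677938333642144094528426106520788952189176643592,
  1852899584235673234852122288876379226537749731243752797108245726729522146443272,
  3705346869613711770041012953339790051155988579692807643603931104661022055661616,
  7588550360315419053558255092578147018660249513468851220059454194619718066715623504,
  118571099599975507010565114053356525145108920381264284882244280503287921288159376,
  474284397516053883023644325791766534456259179813886257125936185638295766011216144,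
  29642774844756421334062376166740499872119038328372854900963937164570016733987344,
  1852675201545871923169164435660843129454237153471750168544835001461684092011536,
  231527639368559482548595304497352042314033489846581108272255276639375664875536,
  463171892368830925210825388048478222162193668231931449746042516925620519178256,
  231591245862891607228501266139155648652438340675229188660501087131945712762896,
  926337597322065654966037216796571758450167101144108116436199154892415911067664,
  237142198758050529048314824026451198981836777189370704447118346944829095825375248,
  3794275180238805085844569759286877377088023106161254195051159044906129147728756752,
  474284624555895171101916841612528582715709381097847875827345350771868983869046880,
  29643679504958844500851807795992906009933857883278178036209448458674868768997536,
  118571555225554510104144056564159416332395172476842646452665128584624303150989600,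
  14821387422403459289760843562064917967036550213041011977835588082996904622031392,
  347404537266670037187116836527201399152217360889154211305746981537622704260128,
  1852687562627497247198628101328500054296180356285094624157901719980913343858720,
  10382058415869198798275595737239584,
  7588550416796292458243831305922114370043074181551991540284950043767206018068520992,
  59292788462038128884135298706065650007285899810311953092374599299815134854266912,
  7412502963445291259864104416211849789980685462868427627417243424647295690375200,
  984232868945234534898128418186757571601084787728345745092628318006161126195232,
  7526486242140688890863337022439356465670475220933078167833542820077571149926592,
  260532207686129447061544991119749851925090625913358528323307374747809224884544,
  926449792218515173082015974262581005905879137437732822148414939002991951217216,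
  1897139399426064741355764181883656791620304990521516188999994069830962358662472768,
  3705346855594131469012845969801559336467651439011198711640385511502328430069824,
  3794276098888877736346098850885909991974974581291495104673779112026454490590756928,
  14879283467426491904110979220886656896926336224306546619987496585559016682881088,
  1867147452755269000932240912416646477520179972491199922815006840560814131249216,
  118574719648863194699410029510093120486048126758275296457438825739100242774589504,
  948568823301648151863983118113431725710640284820740760525013038004423661361037376,
  926350849106406938744552828171461364248854656845650133520123411191456728088960,
  1852729967118811608663971661323780805384569163169363201907121892194895351775872,
  470405362526597455296950663363233879352130603219301322868948749435153880188032,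
  474284397530713347448306048622269481795127844302282515112546360485923409228859520,
  3369170581115169371312299401286175158952151684884755069282029682816,
  7588550586413205434884720468579340182256958270475784512890049745871272437962801280,
  59289169075772010470501895094124273497436431885485863556794476898248808554627200,
  237142311893175121405093014960650000925581757859583149063294236176526457040797824,
  1897166538086497874871856983472323048530323896533595109440530705978653828911726720,
  3707156106988452964613106787814452046973545602015488683456136567271265962820352,
  7425168605793393367395804845148924922518394210836109827312162950222996389758208,
  237142255408420300977769962727810144105461682150305582207979916147428892000407808,
  14828652697510264386487410965753365943919514467506271702931747386890879934406912,
  1897253389224264994302946708039375330819803428087938074832449361526608631720640768,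
  1856292151441611697616446420864514719402341645725035017986112253370663576928512,
  948569021216233390642565086940208035347948912088520034982447065210149669840355584,
  42524911271400238277664852897260634368,
  7588550812569616246531725624607261564149193311953968402295225008816801990897059328,
  59285549689505892881227562561899297501477857148168088085003645171211146893462016,
  3794275406284808123670812720458697984787161138320469524409733778004946017782403584,
  7411598338610846260023226478471542643348546434620295656921866445315317155504640,
  56525302580214717419090650512048838455574582482075465886781093184126091776,
  492116379259436354594539982093588464443779822469820118989339850861033927344640,
  118571099385913533751636800706509490383687266267858582302219724548663111533462016,
  118571099382462663869200416641321148985515683687963843355920696342804832796576768,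
  948568908331165698145194954689581839116516343584926302018046615299137498985333760,
  3705346883632673412175141276649173586730901905913311954509905641285597949723648,
  14825020059948502674571090686284232582600004914548630253318544259781965351224320,
  474284454110367180139183026708075426800760517531451847407967531947245676491965440,
  3794275187195981872876204122249536765564759914291682665447891267179184418229060608,
  14821387643232777566369871268708626886195758272912534861634548633124418665584640,
  231584233702086429715405658741989566607720630887154042778180833617798154496000,
  463168467380577972401408928338503541730796353505609203256579028466742419785728,
  7410693718090088166191560023268550670067525846113002953348046162097859151267840,
  237142198785630553615037422128436078209414034647854214951928461102156416785844224,
  3794275183662504265442528230234462823724406810755976686573985556932083708636170240,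
  474298885662194011969534010055186523094148394182238558430252900879772265375608832,
  1897144827069766720580538345832822942489852959465070428164472310479986760257409024,
  927248406999120179728013551296419358288468764987833724507645567997830064377856,
  948569247358800270460224325868025625531991785960131897799083054533225697491554304,
  7588553978787149887455182641811061198119705138069258700532691113008102678101757952,
  1852674314671465524973150097899925964891554741634157622235329854683470484213760,
  948684590655025718662087308618220569233268707843505746386199759366045612726312960,
  59285549689505893703176371434078284777402931566561992090581024005646981460434944,
  926789026754063441479017686810554480842808539211546869930741994076840632262656,
  463175425200242188680868635881190583224694646915887818972806860438374948282368,
  3763243341951502495768280673843090033032716945644485325810535463157689065938944,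
  1852786506440564090550807562506362830570127347160478758686582345571131554316288,
  474284397545379558432021323681376134523629952308761257010343114162116619459969024,
  1897152064075343210350643109299253699871017608581263806396292237429176577871593472,
  29644584113401645372340214449315208676773045861607103940871111969106762190045184,
  118571099820777470227381219966445550001583620107378311452402612313715878387531776,
  477642368105614315644434647585153382809557260003867393764616238644498637357056,
  3794275632441229045104984659754184569094281237643844854028702276245927570392121344,
  3706251481291285609084866128580549671569867071260115682967169820743101867655168,
  237200094802857932226607839634557551846706759208717014243190652271867535099461632,
  29642774844759738671253077333231981941818657770781998319542433499779571111723008,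
  618818903924263134603444224,
  29642833150706294391147511348691028358383839146019183771044156472964097526530048,
  7411174293589857076109869577391786776742394324265612694796595755625761413857280,
  118572004005571774253760868502087147670848573752228315213684717858282263902486528,
  1897195489649403079822665063144415346217808120170222335721048883476369049260523520,
  118572908632131606422937129258133907961804940452333406823510489763938471504379904,
  948568852012918865163491384482487253925802600782844721316154394112570514355650560,
  231584288929540468583669347466603317508901292443026957477445958928548562599936,
  235202682126016828158454157047945895474741465327876947706483431389217921171456,
  7588579308499919402007320237144477759344120184540454986203772166138096205334577152,
  3712583916441026180093765460953468121526387938985539560934246411998285556613120,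
  174182036567655375985315453657498056392704,
  474284397516050509739314371570788143110598449446069723450977992659593010882281472,
  59286454315203071753782007690117618986115755944811906800065811879694869776039936,
  29758566934044188700817407915334698765367098401699662528436748833803171059466240,
  118571332602824361194968864493041825583057341359743155427786044886766748999614464,
  464978491874983187546933827646707955830775473134702018193104304431225405177856,
  7439643500358110307682340690014747180492871510217776851342593151726042806747136,
  14821387864088450244772644969504753839061165654387760995535013984354793590620160,
  13800122700247733744895178347668173451068013301287955538783671049781248,
  474313373808340887445554752416653744769251570840051698101708862185136226750693376,
  59285620366839359663073682499519209370612319421611215593476592738109514892443648,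
  7588557597276135113548063420301193429949707703654926537543395266816682013858201600,
  578974587865056278410428858302521401663806157289360266609595051989032115372032,
  200818215675066075999277794437776515421408815974967056269312,
  14821444846633199895072135783250658921219158609232225148027966719789905173544960,
  926338480745601129479295259328063146604769612845520436126326926919342361673728,
  59287358940900251450544983834235990324545340242653551810103567139856623549284352,
  29643227212815500069147055833758676009245559181960875683812163315886275336077312,
  237142198771827060921255473272900419379556452351670273916261227184428531713048576,
  7410813856788655012661829718443933920601285633405906924662564305847603565690880,
  521092674572253807539317070298739202369242887977647810249255710308171641782272,
  1042128858349869214994301308939020049454809969585625000353710840235318954688512,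
  237144008230273995018123694272167584359575946424233709923257264581805755942830080,
  289494357870651214017129403272288607429378665110217669692335828325792003129344,
  1897137816234847695875254984400795456880054773379271737355400865926294935070310400,
  1853125740674287342927108817613614878193562106252173388264171548733587498991616,
  3708965468919408218312254249163302369667178345741578563401379774448691797032960,
  948568795915531390790399012044984262805516827729511760781317613705485449110224896,
  7588550363790502653978423986838532783851280448719475283076885623621957884728836096,
  1852701697457935367620120442517445519270700548050143842902537448374764251906048,
  11969698409740094900088178779946376380004350403018752,
  474284510704687223820999476099328751085128214165485299039662803918690253333856256,
  151078834157747177521152,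
  3794304128593260905999943134266394551467202619685475010746913739037433864829009920,
  948583269050150683781516892425730781414605377177060841348800490801483283972489216,
  3821139165700797526049768468594038299684516993968765579108062240230393407078400,
  14822292061877132253480681472350861434698286786761463476547131556307105543618560,
  238821185777401265469766344078515975242942961324472767334033841941738290151424,
  29643001111605179210277379519044193316997265402601107776178732580930831100411904,
  1897137604200690921882727539511782866486241182540803902048388560027950934378151936,
  926562870326612439384123676105371109455181441402790351656673267749825827307520,
  231697284300505226777933511665771137576061372426799440685734955355543242276864,
  7588564834709620617289181217138282258643914264175225625180469710289535277570457600,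
  237142198758037049949155544795417014094430055554701324536298616238780236251004928,
  822551411405070647293041846017132607166052658672067647905988608,
  7410753783988465505939874251931417990773941642285486151599417853465014990536704,
  59285549910577455138880122295864106796665582732531345597998301994093521368252416,
  14821502268299244400880678117934516780496760124832272120853695281360849973805056,
  3794282417165012295626382005661630695130939393021631268886285784939566851050962944,
  463281448991866531156493193297651987868128024447737628252593719768716306022401,
  474285302366051901757152006916678259498298464197481409279661863579757472626245634,
  1968465629187780196996528970350977377396702558602117646296321028983061624127492,
  3705813304081945033763609150615093419395784472316237599941877548794543253487624,
  7410693738849984292391309277607629694767734361601737291197069946188508268855312,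
  1897137703584125990511931839471860688986820114070930081257546991377334633809051680,
  463224923675809633311928849234133009516570144826476895758811297877369999589440,
  14821839849103871105518905149447682699209451222483159036348700908114373855150208,
  59343445747941733471795455732128602157649909592757539988198662346504414571790592,
  948576032038534744717837245870413771435476103573057174226163810183894881162756608,
  955284751736801159406861101144252842278866728578584003083189781192049072014336,
  1897137590947618844549455008156306407799856753005662383940542005340893558427617280,
  233395197147494700185073305845782302095298309223643681317805139318784244322304,
  237142426684747482810723973469923468563325564199600366143598513593798310806691840,
  14821613640916481819960918473833500681222113385870570783550555031681106037456896,
  948572413536608586258709422373717929410882499780152771334823115477999453080682496,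
  237171160915217308152006846889098085530065182001977949541635190423724280801984512,
  237156701038785294823102923080467354209371505558428966269091844779383703694606336,
  118686891482060175693429985323695286342407864847414221294986266278701269380235264,
  3794275236667591425609418979265965372480280197205838346918198292137727551588532224,
  59401341806377574848146638280755283022381415451180900042109464769743084344836096,
  3794390973984461475907655144902124100523101502594493717245455034658326277714345984,
  232489687811063545516107637931579058900919139277462404698360153667305255993344,
  7588608258069945343565095842773086277402673706219572816692811115390411719042924544,
  231810555808740179514383386995926626505134720320016398162458727032619892998144,
  474291641589039689628608040746946914754347519106788819200507064829303987774685184,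
  29671726400972085859328299991867127145804706095211888323483017640608181516238848,
  118571184187670895122103379202849616091834865293271223817389283982319983534276608,
  7588666153230277751802818054452725553294050089882160821764456551770218829015154688,
  1897137591831038993768409265058774026218653107460706351951271601176141031750500352,
  59314497822251587689129544490159045485560642062902884722391041885807905198833664,
  3705410468990249291182431356720837856922755176319093906119778151698491783512064,
  1897137646824177567187286894670093883793111115184941496779393781591586875052654592,
  7588552183642928404616532031577452327098560663865752573438901786673143862513369088,
  474288019552543413350384827677177517665895571128431720982293147634383013017550848,
  14850342512127984361357019934793613157892655299713639340614952099428503176347648,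
  3794333077056419288715024402150624469990225708285014375470338050500366346173284352,
  948570604338918262918007561484728997824878288463831565842913955597876783220785152,
  929955661849836707991871468043361038254540473424246376422550124337559385407488,
  29646421617121621724596479364163650245128853471656751049288928202642760442839040,
  118571226592000448980386685229363597090809484488487384636394017909571412905951232,
  3794275293206643367986944346403569501087453155536439408491434374245020036218486784,
  7410693725101253987251401914082244114610473895452771375242485410621357069172736,
  59300023755878739950133147775653733326831424420096183950116392596192182107373568,
  15176869136335033734167449005088724082328096890125508728651705535917191494092455936,
  29650025985120302819531794395376959407247455334114607454220206443753280263684096,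
  232036933142847968181624803974477437303729471308751668246002286119782237339648,
  3705463470951372138318179390267374920664302219718753989558316056583442037473280,
  7588551293152011126355585124422392108578853544428924665092982991314114200675024896,
  474286207216056667058754508052297276023376078752655423381334766196207175549845504,
  1910569528492419661886832365244992219137540915096862195584744957080414057398272,
  7414312269622653809234816364771993157741427466410188090245591947949511987429376,
  933573947233492092443627002041403891640664050696676409115181909410786620473344,
  14835864967333113464302181489564020328865336724671017120753407532855394257862656,
  1854489746586812543308347352855783900660624837295228404063671165019687317667840,
  237142651961198272728987586048345634500943798524063984026792883544813994604756992,
  463394955301107495113524765176521830447757731231788035330225820441643837292544,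
  948569699768650743454726364996933629079664486805961108953381620332342713077727232,
  29657255923727229639040124454207670267480193875721964032127423761251217574985728,
  118628995451242482999987155550525563900563379881326212861377716036940931532849152,
  463620891085142948200992041220989703474162097815272527714193266981348455743488,
  3705601283296886424298833871462118886168589313299242531789643181685296011935744,
  940810753522924147828801533689644522453234003750591401590602403037149799645184,
  1853581587191935835042741556497412344375508769945756314504231792641234484330496,
  7417930827409400517599453795822519147285340187983636794100476343487201957380096]

/-- Bit masks of the 273 points: bit `l` of entry `p` says that point `p` is on line `l`. -/
def pointTab : List Nat := [
  411376139330301510538742295639337626245683966408394965837217791,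
  822752278660603021077484591278675252491367932816789933821722625,
  1645504557321206042154969182557350504982735865633615045573279746,
  3291009114642412084309938365114701009965471731555354920624455684,
  6582018229284824168619876730229402019930944642837744983321346056,
  13164036458569648337239753460458804039864303596404548201213329424,
  26328072917139296674479506920917608082197237258237031329410580512,
  52656145834278593348959013841835217424624688063908870281177858112,
  105312291668557186697918027683670755572278874105568600877661421696,
  210624583337114373395836055367382079766716852236673300748004491520,
  421249166674228746791672110737298973956059675636249833172730118656,
  842498333348457493583344221636888373451881522716931253624750735488,
  1684996666696914987166688453660281234248272485317123718520005198848,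
  3369993333393829974333377223613022521508861266878146365628461615104,
  6739986666787659948666764584567399277778748931981147154299316342784,
  13479973333575319897333853575627936869130213142647605190043837136897,
  26959946667150639794672379113143566049832768461402317291954781552644,
  53919893334301279589420044148950735273250885771688825255375512084480,
  107839786668602559180044641096323339815426668077105904425771264376896,
  215679573337205118367669395428722185642242690920341841606599285670912,
  431359146674410236797983588313798239953833752154589807984563219071232,
  862718293348820473724751928478213122136241386143543110955289316163592,
  1725436586697640949577082033392593275515461009903082282448504240476160,
  3450873173395281903071379478733466715494342220882853787280563947700240,
  6901746346790563874236262534407101580280443471515006947047258036649984,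
  13803492693581127862984829257815587754195584668691088136341754411753472,
  27606985387162260908571433137265300547857102649082728568782050176270368,
  55213970774324516933993959605757880499297260943008914750107394506884096,
  110427941548649107191080779000825761391522920145337735523436056297865217,
  220855883097298727947570019896743488399112466265970071088159422404887552,
  441711766194596977759337372828577866411035034397075543759235497175580672,
  883423532389197093321256340991322493179090369403662421779813059921182722,
  1766847064778403560869851518798088305900063336115027352277328232106196992,
  3533694129556946379705259113898159111736776849349522012918043737535283201,
  7067388259114139946153708650308521528386044618134941898072816507026407680,
  14134776518229485092777115532542399216720811015638939101170972244781826112,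
  28269553036457364720468846881201958823830646488456195756108474941997910016,
  56539106072914732625368020859029284522901800027765271827747603908646666242,
  113078212145829653667242028359290596139000691205310246759831184290250489920,
  226156424291662147330676515489898417869535069034863313735770533777633312776,
  452312848583292350469166897655769139246096199699686148336602155329765015552,
  904625697166540120980246541939228744123271271641866384038995556015705956352,
  1809251394333123804997424975862748696882363478557850094972547075281172561924,
  3618502788666156925491626459421861951486184760690363975139227940024532074500,
  7237005577332275073400735393695897770246040956440736842458437140757453209632,
  14474011154664525284771143130447235077976246942113275347148385930456578130176,
  28948022309329151737590956987140988180786662243618502455902740869596449931280,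
  57896044618658098122935704062702879094807007324595936726620911415624021839872,
  115792089237316247059010051908325898124473584608652102316080955247008615104514,
  231584178474632596987261039836435039960807307300503324784609887342513866408448,
  463168356949264783313987672897445026706962626553907026243579522015502956232832,
  926336713898529565021398980959585034622209817261838890464176005395351057990144,
  1852673427797059242476687302533089022705905909787082173464266032997872204515328,
  3705346855594118304977957057973992134035931052423786640267766833950122875814016,
  7410693711188236610253976842879362074521745530325274483772875736616377081937920,
  14821387422376473220733733175708040145697940784079187147306701310107839461605376,
  29642774844752946246977795269194758110768652495962424048879484774250969961889792,
  59285549689505892083382828184820997515673806653600912560439616531896661316732928,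
  118571099379011784499402211592905712210603703466873853787463781653984420181311520,
  237142198758023568230787739143245510163029682001988767341081607593236207841575424,
  474284397516047136473025199912407829265467253932632701739345306016554057516195840,
  948568795032094272962978983087288538947801110651974695387455868311976168663285776,
  1897137590064188545819788596852802411028412063268948268744620411809103253559328768,
  3794275180128377091854903734809141748239164947018871973025489645957656824120348672,
  7588550360256754183388420842869021291290435371810463565825848780363460024332189704,
  66696384748513230728060693958082216437984304809260949657573069780977112850629120,
  3796127910096169901916476634920475234171753572297479113485304184575423552685081600,
  9485919534506426947623244931098818654969053358076809184553787059631303469937197072,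
  238097483494231848911640027444046632745255339971870490931816697644377240070266880,
  952274145423107963895363200837630890535436670841541311169831761475840085487288320,
  117615475409855981418722253942700782797380840791991579286005845601794813591680,
  3618530399036321146790016237005532143122629228370046261182475450258793955329,
  133855657366896352882732042827893975246071657609216741550617474884518222529364032,
  474284850063555200824521707055888499819497595339669737493075044367504446400235520,
  29642781967787377664150935937534927970496452906281579118087803340388115865927684,
  110663841544787890124972630757623697177056460860020431042066396261384192,
  904629148329314977255816742505720117571901637186449560169580461069139197952,
  56601221896990423722719343547514865987111697210492416287724326475991646208,
  59778118382044428306909056748646139007255049165714529230913147378100596956463105,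
  235202686655287855610232567830106411014468147397775421363733607341187808888832,
  905177838560121553568533680600761030755290580672434735928369176074667425808,
  57924327982348481276043672678961269455103126724458119565546954364388563222536,
  1897137598015863108272111602146958027255270455194516795618492904867352603348963328,
  281606587181577489527952377664756174388645924147093793914514748776180576379995136,
  474298871527326490732716745938928170873239941467665924317328500076168066025799680,
  9263367138985318670949481501491254598335214375828316533561802546482040163795200,
  4742845899256924908312846497047306724358308368233100580914032931388374895825518594,
  7707237251945859193013679322150395514374039464027265895052783742062850115639443968,
  926340275200487622729593876858930043865982515579255292936637547842796921028608,
  1897253438706338797610850500355815069447739615474044647257942025333374296338202656,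
  74106947712965174992165020178368585462229152589587053225818244492591078280790048,
  4183901613859854231960109363279153769245345383352701912840072515991751491616,
  1881650216585161598753307507765936753142449558201551007921061893359743946194976,
  7410919869338122695444150610955851922386607946352948884787105366245046310993952,
  3794289654139971540294009927180881230788016987087843907568613249067778389990965280,
  474286206770947105086368217821338448611226671719055321923992058508995897059180576,
  29642775176063737203167047511477408374352185707993942041680600596519536918790176,
  927243106550603955642104657351875201935746553845604464047692051210540955992096,
  8774261354047087717153901178005592506203213590038541091491882494202729373269753888,
  289494357870020992149229131466538936041975765564269251028291241195196029337632,
  4168516095980396220526574281895701025860735695793214343848594953341114255409184,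
  949509605867575461202504881386910383601510491655265682250573312156322059213867008,
  7588550586416636091365020480559394506006445713548117833883220999269371320721211393,
  14824101313271466951633011688396723210189573640998098507187648062140284787622400,
  463175424556580047184523411774867921326335915812434771756350797412482281373698,
  296427749365461724510732474886265641599066273791367865377429197538100597323989056,
  118657999985153683956074985146500510009581149040591481941594811283627595830394884,
  31495465941020758277057305540597405890744636495761402925089474870560220034121728,
  478105649539522075867296534679517164225849508122407203075413434920186693839486984,
  7414312269231313538230417093556523887423646244877928707749245893942770149629952,
  3794275632882991571618501239309542833350332096599517828098990051969897432459772032,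
  231584179338640811191164980338971312852305607178757049629182333629068031885568,
  1897137618554597466611991370336488126471023433476369967193797861284429617648631808,
  34753882216803523789699654969176878633518441533954754694809082921024,
  231584399397968038276842330908138143196737937421644108090004291541299116376066,
  1904548285573281705665887693903393011676179928741697945959540581791352219945140232,
  3912846279617817251715162878811681704860847847874873790293255129564084694253993984,
  237157690474812981687973209175960826753282459310125937992125151202418476973031428,
  1852899584546555123073148467305616377007877673099004591343802065127738550780416,
  7607077094590801463614994496414733024624951841897394691965875912705907377796810752,
  926831431080037555856696077397943202423722542007821623922391334698095260992512,
  115792972660857224324509077340709864218428641276105015574180332035772155691008,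
  522877186656411830002006290978050502887227701948851518573487378125103732629504,
  1422853256596347507786960287167986277828829640852522998118083830096962051928752129,
  88931943050851000200999941456664673728308923852243939839291375880864284712898560,
  58122643617440800881658512133842955505622694920334186313115876948413255794688,
  19930918314232566036802431810390477962982674624411877174100543305865133850624,
  7588550363790933592698684012246545823856903783051928600874646900794618678278620160,
  1273712981637543511462134864664777990046059861395548980054264040930620496412673,
  118571099385927856229681260613301730397770464044329538735327659651099740543649792,
  948597743302866681067794604677875852763243309687766897348161438030362177496551424,
  454081427826469329954660098573721920962266655577055109167436205244198944784,
  463168412164986425093270441165412174619670338330894102715316935157925757845512,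
  61138223227734289053701204402687880309943946221447185476088948566990318659960960,
  14821557043145565349595156009838510158041606743435732558564732446147553160855552,
  40759720037232888571065522137051219477078116678696090955678348453674172897296386,
  6165697181843604971714719749607066405605632185531653989558978030429945267748929540,
  14821401557597843525537426472088482269771608055919218425091022524770832196046848,
  3705348622444868963753938745524058386591844062681841906543358641853307690156036,
  113740995477972837539752045382177865641543287786202196937273322291373023232,
  950425991588378007198887726650452646602460205036594474914515468817338274339094536,
  7412510147300516581651493260248413556704500347475619405066332713951762256495616,
  3794304128167940793188846599473096151409976354012793221173041231498913104376365120,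
  1898121822879645140841909547715738661353567211086142607753068225700779438968406144,
  7588550813453028405183775859643679378997394728339109886914270947407256977603051520,
  355713298137062365355424494809640156826792546609639440101164602904191938303361024,
  27775511382005297415521476668584599028541485519170380815802133165146112,
  474284655475718595847407465910802198828349591338490737328942143376432906310254848,
  30236209302956909823330363221229442505570626451830553258007353989803003659419664,
  115820365692322810694261537227802365325576608386958389920584880300464463159296,
  28953323726721650691277864157545396170102113876322951403367949281212831367680,
  21424853936811276240613438780922925870378124704680111988239638618777321480,
  240847545627423706669815966125684948913754959133459053050957745716068305225121793,
  955979941056131119834215622888376421384463353752418955474677345227042552373313540,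
  3794506764362065698507231376634707337222969985541761056668176285691005711104868352,
  14530550530758251408733017843603118366627170030442995136799061396873025687552,
  1956424270535842856040715464086742927187761969245492137004695490534297567484215296,
  30569112887237647355434413619384379937855927631887692237224353944253750327771392,
  8062896272430636585511612837647538410008273857689847762319719046212164588620742720,
  1854482707229789385527109020041582773583068843557772330154746366846668187631632,
  118571212457230781811713771268418162309984186954535602923211214213683826210636800,
  474284397571261745685241157464241398178635543066374724561449550534989129923428368,
  1926782626473197888153497417218765934436070678007087270350651177983340921195855936,
  3554615100826624174563613648483577430667924020639771316100586054867222656,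
  145651804638810877261101035130376401962817113711078687692337514807095352887296,
  2315841786525680800282069445573963030719785139703308337345752694121971727859712,
  113078240818733571971001397214904571577117953568560975879620773734525440000,
  1067371506859565085015301808018773319731297166276746032661746395924415220411285504,
  28469813107368783462075074224873769733063864102559462338788815137669122,
  237142271309181165689882264725097231150528577476527962188258327221570383646818560,
  62990896548658736640211840755058019293972114059971729150101804247110950737478656,
  3794275407168229128153627921273581396209141326859536067426764118611160763488804864,
  22304451410193915295400080327733288546623135890609228231094435211241960668921857,
  3823917983242790966565386208195475048418490962610194269260677820051103626672734209,
  718837289986128399501683043953988972093650361457546303867175774375712663898685568,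
  57896055429596711239192146040324414123226100089018514551218462871045644746754,
  28949016214828398211984894317638648856381369815172880431773874459897078743048,
  457254201883142723319969444325469902778133913954159320908184376169202688,
  3625570178821277270870616964863395123965746445378140012472245839208191688704,
  59531609645982260332545992325906444590705730768344776896463920734534000332251136,
  2091946924711593935593644692503047409115576615498010395229772000448858818560,
  7589013655826692954602872544522822618298092768627893392163823896611991364971823104,
  6484357218145591686522573680353044459007513718358560643132225946635302139330624,
  14937631852285037436528502966232467825379375702569285728387684174927119559688448,
  118572007593620420970940147245334566771461603263280068826507007599551198636544000,
  474980054704775185547427182309683512544009103803198898339061908543036523750097920,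
  148213874223980412185371840177039413530641243229555125457549405784159621130223624,
  239168560319690081620719444861357747917726666199689454028945977069176968376844288,
  117495437858225231874385109909924902654641294110969108147243085306466928640,
  3719821315362295730745004945446592221934594288857373740141199770588779787845632,
  32806816298831368706357389332609042291770665447714579428600476653879348428802,
  2160590292606366077741345718369476642818715405103976088415119044247616,
  2860527772518661082052856175675339367148811759274985389730782578491110982638641152,
  59287359216976818980742562293091115013819472851167338979231579538380171082989824,
  508851955557911184724336934127149762644813976354129204260516725177416942080,
  926336728618673607739498775348084008368419793954842416505082565193571596500996,
  7588550397360569503572689614446531640536267510840120430589290489532704243761414272,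
  3937609613769567106291967643255127894496795316791591987977221375852831998742528,
  14488204596027534842712450870663103047970169436014035392719678005046056845824,
  3810022904271553866904906522385336094995700177591227462459718314574239597896663048,
  7595990001990255119252677546830532547841476384165719050148691079832910665357459456,
  118572908632994482696775487899261611611702470807532698503095397446196442471333889,
  28297175193406210667283909807786086173543561533694927299565030833314594820,
  962269514014087145630708445265778000241134263588534770198983516855277256832,
  59343445734341177551498291464323821553015154105429077172739196031750068919992336,
  1897137594039601194734710511294678756283972639472381366091013837824353363570982914,
  119412358873521029510652203028889438774096371363731995488363658599800017781760,
  949031963402981830157071285070924564443614229797093893644104677323097789717020928,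
  237142205825465752235136191027767331095980048059678960625929852903705969099292672,
  120424232190496558793841075061838383409971875335350205150394940136548630853591040,
  113285264536228348697175377674792828736828984379731602423606033649535893504,
  1007854358857239401901775326074998141810771679689943249803519573168450002824986624,
  3705431664253257235084135584182451620159222148850374246628535205566768255860752,
  463394741131607313831819864509552203514252567542067289375849227215507172622340,
  1897181012097653383562619772036840732314799816475675673528917249201160656082961408,
  474284398401223078541540171076031666621141935410012762377738880986466409884156416,
  29700672656274273794531383513813645773908431416810122287345604947163002350602240,
  11382826445010842026737124103887538279311191856070693941526029942906882718211244288,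
  8337030425734015416297463848942177536954050648262941822543174664139519928860672,
  14825005925272986439607273181414280266733189187301549729851367144854436651729024,
  237375592629607669871803513322151321064176143718576230548836426638953090666987528,
  4031421001143739338653024570042584939266557470377426296735392891529563995992227856,
  7526486242246001183737085482507426100294644872335980230079983155957615596933120,
  14481078543068448819267636373762101527543915013382892761363954153019012022336,
  227937506208663210217907379062077077682850105570484353841743172750828109824,
  918767429357581994673826171159260843454443279189087462788739153109467529217,
  3736104129540419887968454680249174524378198249286322677232761595500228824285184,
  7618193191669945624241162705870187330786532990567207131765843004585692151884554240,
  653067383298465027185607064624512510537080120208968589007394248983428944023781378,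
  1897600758531565966168573086612616938565277244547377641179010994113401407188238848,
  948568795035559048951795766105729525902128069532610521135516377302921024902267008,
  58009122834227592228456025048981667096351094766242080526147508839603207405824,
  16905645912078436907712870469516858305158939023708157833273986488827514047168516,
  1809251502699825106807238960369598662459207376328750562942113265644484952064,
  2134279788822643506311320960050380778437861095759997386634379247184296845305317376,
  1393180112749273371155174367131344463940166608353459413730019096259815455342592,
  7647835910387971895832465377420266278027491949451406456005062066145615687119273988,
  476137072717593007581098191275280454735206825442658724361135344916252717687508992,
  29903420123749066451990911969528963167994878890592254337649884204631936655687808,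
  14821415804083730102046467508891051054242374852624722523685944030948159310004226,
  225174529656886269166587799298850294140207071963879654047094970278510592,
  3798038430123585112517250872127969828913411305426326442404446772575483102719115776,
  125981808122203563930693161105486289013377834752770838504898771352166492120547344,
  14929857724340585662984790876384210492332890060837340996006665508878622457864,
  948684813333023771406170471502807883010697825938723015051773317257359255388028992,
  2705700273869022135652943086822383558114292479302752116246342331776630785,
  59252983164421576742045900326862091081705364029522378540193485552903996309504,
  978211569883759075266122775168391089399782728668499564295590112089523513555223040,
  489134732960732994465174706959664954626061082231947032289201413373491724663422976,
  3853676521908845737301366088495489990656215111796504709015803982326184562441338880,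
  7642337962464756359689590870580556696791468633882175205091418298629400475861056,
  926683015936706100050790566134381434697295119326077594477688543358758552600592,
  7590417507709509610454306123646292614360274149842707646742057180462111590092636162,
  2019417654801637034214745696716376722413478921596027724539519247933552907878662400,
  14604122651004673076182641345105403413902065369743390065999281747409242112,
  237605395387976847949003891917721614345640296972681820424973660305847435510419456,
  111829860420870521131920909684684713931552951583012805327843962063429632,
  36185036515529242932145384103304134590640658250159819389522928714029362839808,
  503934409366377441485043957183235312813553927527606603991642160909492502967877632,
  1898997613575775504275345365467401849836497915055312033640156429142414365657399297,
  3802156279202091926836095811091832342941306595544395399284207672708250400840484864,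
  948633928965713798950045704751098782615236660261351666167321420906554028296504320,
  7589485743227624384778033346268782703802191552808333526195226517039137205893795840,
  3712597995954761488549754970287706300279389954780666070390041746129198132633600,
  118593036579775057920935917371723857157076603759137383965733676092778433168277632,
  10855950509229098305138434499696147522546729848268736419085061006395352023552,
  237149888131771294317068836667184489714592852592339156969866161050357092323426306,
  14828624428038055116193660450622415152991019467374539111621374441390557638950928,
  238828265243717282933409001052407175342144927471650662032500840273363584712704,
  59292843234202987825310428893987416546496385215317011988455517398741481108275208,
  7238993281135800667897765943732120380354573220610768277845610425842363809792,
  8169901905933321520365526316257831133786721225082881295069444417835665195072,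
  123032742387592739664578080284175864694078242585449354946454911974151485915140]

/-- The blocks of the unital (as bit masks), grouped by their least point. -/
def groupTab : List (List Nat) := [
  [8858402819, 281614563147781, 13194139598857, 18446744623467462673, 2305913377966260257, 288247968404865089, 309237907585, 10133099161585921, 35201553007105, 579275502070531073, 671617025, 148618856422711297, 9223512774347341825, 1152923703663788033, 4665729213972611073, 72058698918264833],
  [70437463785478, 282024866742282, 72057596218966034, 576495937212383266, 23058430092137201730, 4398056996994, 36028801314455810, 9148211621003778, 2200097002498, 9223380867307538434, 1170935903183446018, 289356293238439938, 2252899326427138, 2310346608862035970, 144695867654275074],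
  [18527808867002220556, 576460756598423572, 8607236132, 34897657924, 562950054084740, 5497826574596, 2323857957478990340, 288230376286192644, 6896136929413124, 9367487242110504964, 37172289111859204, 4611688217452756996, 1152921505684848644, 44255351406596],
  [43016781848, 144115191297081384, 4580180040, 1188951401137438856, 2251954432508168, 288230444875383304, 6917546619827127304, 18014398510549000, 633593575510024, 576460752305659912, 9224533121133740040, 4505799187759112, 140737530822664],
  [13835058055282229296, 2305843010287566928, 8813272899728, 288232850052874512, 1152921642062578192, 9042383631025168, 21990769428496, 40813871623049232, 563018941349904, 212205744422928, 164381386399547408, 1125900050497552],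
  [1152930300834087008, 18446884811466342560, 18014501588697376, 1130297953616416, 4504836577952800, 72339069081749536, 17596485210144, 565148977733664, 824633868320, 45036013453606944, 290482176001048608],
  [18014400656969920, 549789401408, 844424938521152, 9223442405598962752, 3298539079744, 589971551185551424, 72057611218387008, 36029209337921600, 145381834060988480, 2291450951761984],
  [11529215046605341056, 576531122121343616, 1125968626844800, 144115188092766336, 299075752706176, 4899916532018086016, 4538788294492288, 72058143798984832, 11261198225899648],
  [4512395722490624, 72057602636252416, 1152956688978956544, 4611826756989493504, 720857415356055808, 18447307023797321984, 2219049216, 87960948048128],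
  [144115188142982656, 36028797421619712, 18446744082299556352, 38688268800, 19791209857536, 9223373138514018816, 4685995412815872512],
  [19599665578316434432, 275179963392, 18018800851092480, 36037595260519424, 422246826902528, 567489332224],
  [206166824960, 288230378299271168, 563504004466688, 2882304036395550720, 26845644800, 4611791571577210880],
  [2251800082395136, 2305843009282936832, 73192290037927936, 864831865944543232, 9008298816704512, 4611691000589455360],
  [2377900603385864192, 1100056928256, 9007886450040832, 4681518555136, 18447060733075136512],
  [8796110110720, 70506720083968, 18446745207581458432, 2251806264541184, 36033196172787712],
  [18155136132153344, 2533274794754048, 344672206848, 5066586088046592, 216247548904505344],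
  [9024825800720384, 2341871874952462336, 1688849879203840, 2748854632448],
  [146030329856, 288265560792891392, 4616189635243147264, 36169535111430144],
  [9223653512906014720, 90107176921858048, 1306043891946094592, 576478361703153664],
  [4507997742563328, 1152991875501129728, 4612257764478550016],
  [9232379240407629824, 20896702271033704448, 5764888998280429568],
  [144115188887453696, 18760553463808],
  [19059233623044521984, 19140435893026816, 70420422197248],
  [288230411610357760, 9241404027827126272],
  [9225624111630254080, 576465152648413184, 72200599285792768],
  [9227875645239853056, 290340359634944],
  [35323086110720, 9086364427485184, 18446744163970973696, 5189273770216390656],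
  [4755801485810335744],
  [5630050632204288, 2305845227832737792, 648518518408478720],
  [27584549328257024, 18447870251178655744, 1441151894180331520],
  [18449022262876045312],
  [4620693297139023872, 194065949786112],
  [2305992684528992256, 1479946945953792],
  [38351523922575360, 2306442251640766464, 594486154519117824],
  [18297265055596544, 1153629607275003904],
  [180181402849902592, 3462142247900807168],
  [10952754912240336896],
  [27670122845073047552],
  [1229500565336096768],
  [432356009588031488],
  [],
  [],
  [2603366457643368448],
  [],
  [],
  [],
  [18757562816742293504],
  [],
  [],
  [9620251754016800768],
  [],
  [],
  [],
  [],
  [],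
  [],
  [],
  [],
  [],
  [],
  [],
  [],
  [],
  [],
  []]

/-- `if c then t else f`, in a form that the kernel evaluates quickly. -/
@[reducible] noncomputable def sel (c t f : Bool) : Bool := @Bool.rec (fun _ => Bool) f t c

/-- Bit test, in a form that the kernel evaluates quickly. -/
@[reducible] def tb (m n : Nat) : Bool := Nat.beq (Nat.land 1 (Nat.shiftRight m n)) 1

/-- `x` is a power of two, at most `2 ^ 272`. -/
@[reducible] def isPow (x : Nat) : Bool := Nat.beq (Nat.mod 7588550360256754183279148073529370729071901715047420004889892225542594864082845696 x) 0

/-- `f` holds on the whole list. -/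
@[reducible] noncomputable def allL (f : Nat → Bool) (l : List Nat) : Bool :=
  @List.rec Nat (fun _ => Bool) true (fun a _ r => sel (f a) r false) l

/-- All pairs of entries (at different positions) meet in exactly one bit. -/
@[reducible] noncomputable def chkPairs (l : List Nat) : Bool :=
  @List.rec Nat (fun _ => Bool) true
    (fun a t r => sel (allL (fun b => isPow (Nat.land a b)) t) r false) l

/-- Bit `i` of the `p`-th entry of the list is bit `p + s` of `m`. -/
@[reducible] noncomputable def chkRow (m i : Nat) (l : List Nat) : Nat → Bool :=
  @List.rec Nat (fun _ => Nat → Bool) (fun _ => true)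
    (fun a _ r s => sel (Nat.beq (Nat.land 1 (Nat.shiftRight m s))
      (Nat.land 1 (Nat.shiftRight a i))) (r (Nat.succ s)) false) l

/-- The table `P` is the transpose of the given table. -/
@[reducible] noncomputable def chkTrans (P : List Nat) (l : List Nat) : Nat → Bool :=
  @List.rec Nat (fun _ => Nat → Bool) (fun _ => true)
    (fun m _ r i => sel (chkRow m i P 0) (r (Nat.succ i)) false) l

/-- The number of bits of `m` below `n`. -/
@[reducible] noncomputable def cnt (m : Nat) (n : Nat) : Nat :=
  @Nat.rec (fun _ => Nat) 0 (fun k r => Nat.add r (Nat.land 1 (Nat.shiftRight m k))) n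

/-- The mask of the point set `{0, …, 64}`. -/
@[reducible] def uMask : Nat := 36893488147419103231

/-- Does the group of the least bit of `b` contain `b`? -/
@[reducible] noncomputable def chkGroup (b : Nat) (l : List (List Nat)) : Nat → Bool :=
  @List.rec (List Nat) (fun _ => Nat → Bool) (fun _ => true)
    (fun g _ r p => sel (tb b p)
      (@List.rec Nat (fun _ => Bool) false (fun c _ s => sel (Nat.beq c b) true s) g)
      (r (Nat.succ p))) l

/-- Exhaustive search: `true` means that `used` does not extend to an exact cover. -/
@[reducible] noncomputable def search (l : List (List Nat)) : Nat → Nat → Bool :=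
  @List.rec (List Nat) (fun _ => Nat → Nat → Bool) (fun _ _ => false)
    (fun g _ r p used => sel (tb used p) (r (Nat.succ p) used)
      (allL (fun b => sel (Nat.beq (Nat.land b used) 0)
        (r (Nat.succ p) (Nat.lor used b)) true) g)) l

theorem lineTab_length : lineTab.length = 273 := by decide +kernel
theorem pointTab_length : pointTab.length = 273 := by decide +kernel
theorem groupTab_length : groupTab.length = 65 := by decide +kernel
theorem lineTab_pairs : chkPairs lineTab = true := by decide +kernel
theorem pointTab_pairs : chkPairs pointTab = true := by decide +kernel
theorem tab_trans : chkTrans pointTab lineTab 0 = true := by decide +kernel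
theorem lineTab_cnt : allL (fun m => Nat.beq (cnt m 273) 17) lineTab = true := by decide +kernel
theorem lineTab_ucnt : allL (fun m => sel (Nat.beq (cnt (Nat.land m uMask) 273) 1) true
    (sel (Nat.beq (cnt (Nat.land m uMask) 273) 5) (chkGroup (Nat.land m uMask) groupTab 0) false))
    lineTab = true := by
  decide +kernel
theorem search_eq : search groupTab 0 0 = true := by decide +kernel

theorem sel_eq_true {c t f : Bool} : sel c t f = true ↔ (c = true ∧ t = true) ∨ (c = false ∧ f = true) := by
  cases c <;> simp [sel]

theorem tb_eq (m n : Nat) : tb m n = Nat.testBit m n := by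
  have h : Nat.land 1 (Nat.shiftRight m n) = (m >>> n) % 2 := by
    change 1 &&& (m >>> n) = _
    rw [Nat.and_comm, Nat.and_one_is_mod]
  unfold tb
  rw [h, Nat.testBit_eq_decide_div_mod_eq, Nat.shiftRight_eq_div_pow]
  rw [Bool.eq_iff_iff]
  simp

theorem land_one (m n : Nat) : Nat.land 1 (Nat.shiftRight m n) = if Nat.testBit m n then 1 else 0 := by
  have h : Nat.land 1 (Nat.shiftRight m n) = (m >>> n) % 2 := by
    change 1 &&& (m >>> n) = _
    rw [Nat.and_comm, Nat.and_one_is_mod]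
  rw [h, Nat.testBit_eq_decide_div_mod_eq, Nat.shiftRight_eq_div_pow]
  rcases Nat.mod_two_eq_zero_or_one (m / 2 ^ n) with h | h <;> simp [h]

theorem isPow_spec {x : Nat} (h : isPow x = true) : ∃ k, k < 273 ∧ x = 2 ^ k := by
  have h1 := Nat.eq_of_beq_eq_true h
  have h2 : x ∣ 2 ^ 272 := by
    apply Nat.dvd_of_mod_eq_zero
    rw [← h1]
    rfl
  obtain ⟨k, hk, rfl⟩ := (Nat.dvd_prime_pow Nat.prime_two).1 h2
  exact ⟨k, by omega, rfl⟩

theorem allL_spec {f : Nat → Bool} {l : List Nat} (h : allL f l = true) : ∀ a ∈ l, f a = true := by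
  induction l with
  | nil => simp
  | cons a t ih =>
    have h' : sel (f a) (allL f t) false = true := h
    rw [sel_eq_true] at h'
    simp only [Bool.false_eq_true, and_false, or_false] at h'
    intro b hb
    rcases List.mem_cons.1 hb with rfl | hb
    · exact h'.1
    · exact ih h'.2 b hb

theorem chkPairs_spec {l : List Nat} (h : chkPairs l = true) :
    l.Pairwise (fun a b => ∃ k, k < 273 ∧ a &&& b = 2 ^ k) := by
  induction l with
  | nil => exact List.Pairwise.nil
  | cons a t ih =>
    have h' : sel (allL (fun b => isPow (Nat.land a b)) t) (chkPairs t) false = true := h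
    rw [sel_eq_true] at h'
    simp only [Bool.false_eq_true, and_false, or_false] at h'
    exact List.Pairwise.cons (fun b hb => isPow_spec (allL_spec h'.1 b hb)) (ih h'.2)

theorem chkRow_spec {m i : Nat} {l : List Nat} (s : Nat) (h : chkRow m i l s = true) :
    ∀ p (hp : p < l.length), Nat.testBit m (s + p) = Nat.testBit l[p] i := by
  induction l generalizing s with
  | nil => intro p hp; simp at hp
  | cons a t ih =>
    have h' : sel (Nat.beq (Nat.land 1 (Nat.shiftRight m s))
      (Nat.land 1 (Nat.shiftRight a i))) (chkRow m i t (s + 1)) false = true := h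
    rw [sel_eq_true] at h'
    simp only [Bool.false_eq_true, and_false, or_false] at h'
    intro p hp
    cases p with
    | zero =>
      have := Nat.eq_of_beq_eq_true h'.1
      rw [land_one, land_one] at this
      simp only [Nat.add_zero, List.getElem_cons_zero]
      cases h1 : Nat.testBit m s <;> cases h2 : Nat.testBit a i <;> simp_all
    | succ p =>
      have := ih (s + 1) h'.2 p (by simpa using hp)
      simpa [Nat.add_assoc, Nat.add_comm 1 p] using this

theorem chkTrans_spec {P l : List Nat} (s : Nat) (h : chkTrans P l s = true) :
    ∀ i (hi : i < l.length), ∀ p (hp : p < P.length),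
      Nat.testBit l[i] p = Nat.testBit P[p] (s + i) := by
  induction l generalizing s with
  | nil => intro p hp; simp at hp
  | cons a t ih =>
    have h' : sel (chkRow a s P 0) (chkTrans P t (s + 1)) false = true := h
    rw [sel_eq_true] at h'
    simp only [Bool.false_eq_true, and_false, or_false] at h'
    intro i hi p hp
    cases i with
    | zero => simpa using chkRow_spec 0 h'.1 p hp
    | succ i =>
      have := ih (s + 1) h'.2 i (by simpa using hi) p hp
      simpa [Nat.add_assoc, Nat.add_comm 1 i] using this

theorem cnt_spec (m n : Nat) : {p : Fin n | Nat.testBit m p = true}.ncard = cnt m n := by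
  have h : ∀ n, cnt m n = ∑ p : Fin n, if Nat.testBit m p then 1 else 0 := by
    intro n
    induction n with
    | zero => simp [cnt]
    | succ k ih =>
      rw [Fin.sum_univ_castSucc]
      have : cnt m (k + 1) = cnt m k + Nat.land 1 (Nat.shiftRight m k) := rfl
      rw [this, ih, land_one]
      simp
  rw [h, Set.ncard_eq_toFinset_card']
  simp

/-- The bit mask of a line. -/
def lineMask (l : Fin 273) : Nat := lineTab[l.1]'(by rw [lineTab_length]; exact l.2)

/-- The bit mask of a point. -/
def pointMask (p : Fin 273) : Nat := pointTab[p.1]'(by rw [pointTab_length]; exact p.2)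

theorem lineMask_mem (l : Fin 273) : lineMask l ∈ lineTab := List.getElem_mem _

theorem mask_eq (p l : Fin 273) : (lineMask l).testBit p = (pointMask p).testBit l := by
  have := chkTrans_spec 0 tab_trans l.1 (by rw [lineTab_length]; exact l.2) p.1
    (by rw [pointTab_length]; exact p.2)
  simpa [lineMask, pointMask] using this

theorem unique_of_pairs {tab : List Nat} (hlen : tab.length = 273) (h : chkPairs tab = true)
    (l m : Fin 273) (hlm : l ≠ m) :
    ∃! p : Fin 273, (tab[l.1]'(by rw [hlen]; exact l.2)).testBit p = true ∧
      (tab[m.1]'(by rw [hlen]; exact m.2)).testBit p = true := by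
  have hp := List.pairwise_iff_getElem.1 (chkPairs_spec h)
  have key : ∃ k, k < 273 ∧ (tab[l.1]'(by rw [hlen]; exact l.2)) &&&
      (tab[m.1]'(by rw [hlen]; exact m.2)) = 2 ^ k := by
    rcases lt_or_gt_of_ne hlm with h1 | h1
    · exact hp l.1 m.1 _ _ h1
    · rw [Nat.and_comm]
      exact hp m.1 l.1 _ _ h1
  obtain ⟨k, hk, e⟩ := key
  have e2 : ∀ i : Nat, ((tab[l.1]'(by rw [hlen]; exact l.2)).testBit i = true ∧
      (tab[m.1]'(by rw [hlen]; exact m.2)).testBit i = true) ↔ k = i := by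
    intro i
    rw [← Bool.and_eq_true, ← Nat.testBit_and, e, Nat.testBit_two_pow]
    simp
  refine ⟨⟨k, hk⟩, (e2 k).2 rfl, ?_⟩
  intro y hy
  exact Fin.ext ((e2 y).1 hy).symm

theorem quad_ok : allL (fun m => Nat.ble (cnt (Nat.land m 15) 4) 2) lineTab = true := by
  decide +kernel

theorem nondeg : ∃ f : Fin 4 → Fin 273, Function.Injective f ∧
    ∀ l : Fin 273, ∀ i j k : Fin 4, i ≠ j → i ≠ k → j ≠ k →
      ¬((lineMask l).testBit (f i) = true ∧ (lineMask l).testBit (f j) = true ∧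
        (lineMask l).testBit (f k) = true) := by
  refine ⟨Fin.castLE (by norm_num), Fin.castLE_injective _, ?_⟩
  rintro l i j k hij hik hjk ⟨h1, h2, h3⟩
  have h := Nat.le_of_ble_eq_true (allL_spec quad_ok _ (lineMask_mem l))
  rw [← cnt_spec] at h
  have hs : ({i, j, k} : Set (Fin 4)) ⊆
      {p : Fin 4 | Nat.testBit (Nat.land (lineMask l) 15) p = true} := by
    have hb : ∀ p : Fin 4, (lineMask l).testBit p = true →
        Nat.testBit (Nat.land (lineMask l) 15) p = true := by
      intro p hp
      change Nat.testBit (lineMask l &&& 15) p = true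
      rw [Nat.testBit_and, hp]
      fin_cases p <;> decide
    rintro x (rfl | rfl | rfl)
    · exact hb _ h1
    · exact hb _ h2
    · exact hb _ h3
  have h4 := Set.ncard_le_ncard hs (Set.toFinite _)
  rw [Set.ncard_eq_three.2 ⟨i, j, k, hij, hik, hjk, rfl⟩] at h4
  omega

/-- The projective plane of order 16 given by the tables. -/
def plane : ProjPlane where
  Point := Fin 273
  Line := Fin 273
  Incid p l := (lineMask l).testBit p = true
  finite_point := inferInstance
  finite_line := inferInstance
  exists_unique_line p q hpq := by
    simp only [mask_eq]
    exact unique_of_pairs pointTab_length pointTab_pairs p q hpq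
  exists_unique_point l m hlm := unique_of_pairs lineTab_length lineTab_pairs l m hlm
  nondegenerate := nondeg

/-- The unital: the first 65 points. -/
def unital : Set plane.Point := {p : Fin 273 | p.1 < 65}

theorem testBit_uMask (i : Nat) : uMask.testBit i = decide (i < 65) := by
  have : uMask = 2 ^ 65 - 1 := by norm_num [uMask]
  rw [this, Nat.testBit_two_pow_sub_one]

theorem testBit_block (m i : Nat) :
    (Nat.land m uMask).testBit i = true ↔ m.testBit i = true ∧ i < 65 := by
  change (m &&& uMask).testBit i = true ↔ _
  rw [Nat.testBit_and, testBit_uMask]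
  simp

theorem inter_ncard (l : plane.Line) :
    (unital ∩ {p | plane.Incid p l}).ncard = cnt (Nat.land (lineMask l) uMask) 273 := by
  have h : unital ∩ {p | plane.Incid p l} =
      {p : Fin 273 | Nat.testBit (Nat.land (lineMask l) uMask) p = true} := by
    ext p
    exact and_comm.trans (testBit_block (lineMask l) (Fin.val p)).symm
  exact (congrArg Set.ncard h).trans (cnt_spec _ _)

theorem ucnt (l : Fin 273) : cnt (Nat.land (lineMask l) uMask) 273 = 1 ∨
    (cnt (Nat.land (lineMask l) uMask) 273 = 5 ∧
      chkGroup (Nat.land (lineMask l) uMask) groupTab 0 = true) := by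
  have h := allL_spec lineTab_ucnt _ (lineMask_mem l)
  rw [sel_eq_true, sel_eq_true] at h
  rcases h with h | ⟨_, h | h⟩
  · exact Or.inl (Nat.eq_of_beq_eq_true h.1)
  · exact Or.inr ⟨Nat.eq_of_beq_eq_true h.1, h.2⟩
  · simp at h

theorem plane_order : plane.HasOrder 16 := by
  intro l
  have h := Nat.eq_of_beq_eq_true (allL_spec lineTab_cnt _ (lineMask_mem l))
  rw [← cnt_spec] at h
  exact h

theorem unital_ncard : unital.ncard = 65 := by
  have h : {p : Fin 273 | p.1 < 65} = Set.range (Fin.castLE (by norm_num : 65 ≤ 273)) := by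
    ext p
    constructor
    · intro hp
      exact ⟨⟨p.1, hp⟩, rfl⟩
    · rintro ⟨q, rfl⟩
      exact q.2
  have h2 : {p : Fin 273 | p.1 < 65}.ncard = 65 := by
    rw [h, ← Set.image_univ, Set.ncard_image_of_injective _ (Fin.castLE_injective _)]
    simp [Set.ncard_univ]
  exact h2

theorem isUnital : plane.IsUnital 4 unital := by
  refine ⟨unital_ncard, fun l => ?_⟩
  rw [inter_ncard]
  rcases ucnt l with h | h
  · exact Or.inl h
  · exact Or.inr h.1

theorem any_spec {b : Nat} {g : List Nat}
    (h : @List.rec Nat (fun _ => Bool) false (fun c _ s => sel (Nat.beq c b) true s) g = true) :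
    b ∈ g := by
  induction g with
  | nil => simp at h
  | cons a t ih =>
    have h' := sel_eq_true.1 h
    rcases h' with h' | h'
    · rw [Nat.eq_of_beq_eq_true h'.1]
      exact List.mem_cons_self
    · exact List.mem_cons_of_mem _ (ih h'.2)

theorem search_sound (T : Nat → Prop)
    (hcov : ∀ i, i < 65 → ∃ b, T b ∧ b.testBit i = true)
    (hdis : ∀ b c i, T b → T c → b.testBit i = true → c.testBit i = true → b = c)
    (gs : List (List Nat)) : ∀ (p used : Nat), p + gs.length = 65 →
    (∀ b, T b → (∀ i, i < p → b.testBit i = false) → chkGroup b gs p = true) →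
    (∀ i, used.testBit i = true → ∃ b, T b ∧ b.testBit i = true ∧
      ∀ j, b.testBit j = true → used.testBit j = true) →
    (∀ i, i < p → used.testBit i = true) → search gs p used = true → False := by
  induction gs with
  | nil => intro p used _ _ _ _ h; simp [search] at h
  | cons g gs ih =>
    intro p used hlen hgrp hused hlow h
    have hlen' : p + 1 + gs.length = 65 := by simp at hlen; omega
    have hgrp' : ∀ b, T b → (∀ i, i < p + 1 → b.testBit i = false) →
        chkGroup b gs (p + 1) = true := by
      intro b hb hi
      have h1 : sel (tb b p) _ (chkGroup b gs (p + 1)) = true :=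
        hgrp b hb (fun i h => hi i (by omega))
      rw [sel_eq_true, tb_eq, hi p (by omega)] at h1
      simpa using h1
    have h' : sel (tb used p) (search gs (p + 1) used)
      (allL (fun b => sel (Nat.beq (Nat.land b used) 0)
        (search gs (p + 1) (Nat.lor used b)) true) g) = true := h
    rw [sel_eq_true, tb_eq] at h'
    rcases h' with ⟨h1, h2⟩ | ⟨h1, h2⟩
    · refine ih (p + 1) used hlen' hgrp' hused ?_ h2
      intro i hi
      rcases Nat.lt_succ_iff_lt_or_eq.1 hi with hi | rfl
      · exact hlow i hi
      · exact h1
    · obtain ⟨b, hb, hbp⟩ := hcov p (by omega)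
      have hdj : ∀ i, b.testBit i = true → used.testBit i = true → False := by
        intro i hi hui
        obtain ⟨c, hc, hci, hcu⟩ := hused i hui
        have := hdis b c i hb hc hi hci
        subst this
        rw [hcu p hbp] at h1
        simp at h1
      have hmem : b ∈ g := by
        have h3 := hgrp b hb (fun i hi => by
          by_contra hne
          exact hdj i (by simpa using hne) (hlow i hi))
        have h3' : sel (tb b p) _ (chkGroup b gs (p + 1)) = true := h3
        rw [sel_eq_true, tb_eq, hbp] at h3'
        simp only [true_and, Bool.true_eq_false, false_and, or_false] at h3'
        exact any_spec h3'
      have h4 := allL_spec h2 b hmem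
      have hz : Nat.land b used = 0 := by
        change b &&& used = 0
        apply Nat.eq_of_testBit_eq
        intro i
        rw [Nat.testBit_and, Nat.zero_testBit]
        by_contra hne
        have : b.testBit i = true ∧ used.testBit i = true := by simpa using hne
        exact hdj i this.1 this.2
      rw [sel_eq_true, hz] at h4
      have h5 : search gs (p + 1) (Nat.lor used b) = true := by
        rcases h4 with h4 | h4
        · exact h4.2
        · simp at h4
      have hor : ∀ i, (Nat.lor used b).testBit i = true ↔
          used.testBit i = true ∨ b.testBit i = true := by
        intro i
        change (used ||| b).testBit i = true ↔ _
        rw [Nat.testBit_or]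
        simp
      refine ih (p + 1) _ hlen' hgrp' ?_ ?_ h5
      · intro i hi
        rcases (hor i).1 hi with hi | hi
        · obtain ⟨c, hc, hci, hcu⟩ := hused i hi
          exact ⟨c, hc, hci, fun j hj => (hor j).2 (Or.inl (hcu j hj))⟩
        · exact ⟨b, hb, hi, fun j hj => (hor j).2 (Or.inr hj)⟩
      · intro i hi
        rcases Nat.lt_succ_iff_lt_or_eq.1 hi with hi | rfl
        · exact (hor i).2 (Or.inl (hlow i hi))
        · exact (hor i).2 (Or.inr hbp)

theorem no_parallel (C : Set (Set ↥unital)) (hC : C ⊆ plane.unitalBlocks 4 unital)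
    (hd : C.Pairwise Disjoint) (hU : ⋃₀ C = Set.univ) : False := by
  refine search_sound (fun b => ∃ l : plane.Line,
      (unital ∩ {p | plane.Incid p l}).ncard = 5 ∧ {x : ↥unital | plane.Incid x.1 l} ∈ C ∧
      b = Nat.land (lineMask l) uMask) ?_ ?_ groupTab 0 0 ?_ ?_ ?_ ?_ search_eq
  · intro i hi
    have hx : (⟨(⟨i, by omega⟩ : Fin 273), hi⟩ : ↥unital) ∈ ⋃₀ C := by rw [hU]; trivial
    obtain ⟨s, hs, hxs⟩ := hx
    obtain ⟨l, hl, rfl⟩ := hC hs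
    exact ⟨_, ⟨l, hl, hs, rfl⟩, (testBit_block _ _).2 ⟨hxs, hi⟩⟩
  · rintro b c i ⟨l, _, hl, rfl⟩ ⟨m, _, hm, rfl⟩ h1 h2
    rw [testBit_block] at h1 h2
    have hi : i < 65 := h1.2
    have heq : {x : ↥unital | plane.Incid x.1 l} = {x : ↥unital | plane.Incid x.1 m} := by
      by_contra hne
      have := hd hl hm hne
      rw [Set.disjoint_left] at this
      exact @this ⟨(⟨i, by omega⟩ : Fin 273), hi⟩ h1.1 h2.1
    apply Nat.eq_of_testBit_eq
    intro j
    rw [Bool.eq_iff_iff, testBit_block, testBit_block]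
    refine and_congr_left fun hj => ?_
    exact Set.ext_iff.1 heq ⟨(⟨j, by omega⟩ : Fin 273), hj⟩
  · rw [groupTab_length]
  · rintro b ⟨l, hl, _, rfl⟩ _
    rw [inter_ncard] at hl
    rcases ucnt l with h | h
    · omega
    · exact h.2
  · intro i hi
    simp at hi
  · intro i hi
    omega

end UnitalSearch

/-- There are a projective plane of order 16 and a unital in it whose associated
`2-(65,5,1)` design has no parallel class: no set of 13 pairwise disjoint blocks
covers the whole point set. -/
theorem exists_unital_design_without_parallel_class :
    ∃ (Pl : ProjPlane) (U : Set Pl.Point),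
      Pl.HasOrder 16 ∧ Pl.IsUnital 4 U ∧
      ¬ ∃ C : Set (Set ↥U), C ⊆ Pl.unitalBlocks 4 U ∧ C.ncard = 13 ∧
          C.Pairwise Disjoint ∧ ⋃₀ C = Set.univ := by
  refine ⟨UnitalSearch.plane, UnitalSearch.unital, UnitalSearch.plane_order,
    UnitalSearch.isUnital, ?_⟩
  rintro ⟨C, hC, _, hd, hU⟩
  exact UnitalSearch.no_parallel C hC hd hU
end
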